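/- For integers n ≥ ω ≥ 0 of opposite parity, the curve c_{ω,n}, with k = (n + ω − 1)/2 crossings along its middle horizontal line and l = (n − ω + 1)/2 empty outward 1-gons along its outer circle, has exactly n crossings, Whitney winding number ω, and satisfies f^X(c_{ω,n}) = Σ_{i=1}^{k} X_{l+i−1, i−k} + l·X_{0, l−1−k}. -/

import Mathlib

open Set
open scoped ENNReal

noncomputable section

namespace CurvePaper


/-- The determinant of two vectors in the plane `ℝ² ≅ ℂ`. -/
def det2 (u v : ℂ) : ℝ := u.re * v.im - u.im * v.re

/-- The determinant of three vectors in `ℝ³`. -/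
def det3 (a b c : EuclideanSpace ℝ (Fin 3)) : ℝ :=
  a 0 * (b 1 * c 2 - b 2 * c 1) - a 1 * (b 0 * c 2 - b 2 * c 0) + a 2 * (b 0 * c 1 - b 1 * c 0)

/-- The homomorphism `φ : 𝕏 → ℤ`, `X_{a,b} ↦ a - b`, on the free abelian group `𝕏`
with basis `{X_{a,b} : a b ∈ ℤ}`. -/
def phi : FreeAbelianGroup (ℤ × ℤ) →+ ℤ :=
  FreeAbelianGroup.lift fun p : ℤ × ℤ => p.1 - p.2

/-! ### Planar curves -/

/-- A closed planar curve: a smooth immersion of the circle `ℝ/ℤ` into the plane. -/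
structure PlanarCurve : Type where
  toFun : ℝ → ℂ
  periodic : Function.Periodic toFun 1
  smooth : ContDiff ℝ (⊤ : ℕ∞) toFun
  immersion : ∀ t : ℝ, deriv toFun t ≠ 0

namespace PlanarCurve

/-- The number of parameters in one period mapping to a given point. -/
def multF (f : ℝ → ℂ) (p : ℂ) : ℕ := Set.ncard {t ∈ Set.Ico (0:ℝ) 1 | f t = p}

/-- All self-intersections of `f` at the point `p` are transverse. -/
def TransverseF (f : ℝ → ℂ) (p : ℂ) : Prop :=
  ∀ s ∈ Set.Ico (0:ℝ) 1, ∀ t ∈ Set.Ico (0:ℝ) 1, s ≠ t → f s = p → f t = p →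
    det2 (deriv f s) (deriv f t) ≠ 0

/-- The set of self-intersection points of a parametrized curve. -/
def crossingSetF (f : ℝ → ℂ) : Set ℂ := {p : ℂ | 2 ≤ multF f p}

/-- A parametrized curve is stable if its only self-intersections are finitely many
transverse double points. -/
def StableF (f : ℝ → ℂ) : Prop :=
  (crossingSetF f).Finite ∧ ∀ p : ℂ, multF f p ≤ 2 ∧ (multF f p = 2 → TransverseF f p)

/-- A planar curve is stable if its only self-intersections are transverse double points. -/
def Stable (c : PlanarCurve) : Prop := StableF c.toFun

/-- The number of crossings (self-intersection points) of a planar curve. -/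
def crossings (c : PlanarCurve) : ℕ := (crossingSetF c.toFun).ncard

/-- `c` has Whitney winding number `ω`: the degree of the normalized derivative map
`S¹ → S¹`, expressed via a continuous lift of its angle. -/
def HasWhitney (c : PlanarCurve) (ω : ℤ) : Prop :=
  ∃ θ : ℝ → ℝ, Continuous θ ∧
    (∀ t : ℝ, deriv c.toFun t = (‖deriv c.toFun t‖ : ℂ) * Complex.exp ((θ t : ℂ) * Complex.I)) ∧
    θ 1 - θ 0 = 2 * Real.pi * (ω : ℝ)

/-- `H` is a regular homotopy between parametrized curves `f` and `g`:
a continuously varying family of immersed closed curves. -/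
def IsRegHomotopy (f g : ℝ → ℂ) (H : ℝ → ℝ → ℂ) : Prop :=
  (Continuous fun q : ℝ × ℝ => H q.1 q.2) ∧
  (Continuous fun q : ℝ × ℝ => deriv (H q.1) q.2) ∧
  (∀ s : ℝ, Function.Periodic (H s) 1) ∧
  (∀ s : ℝ, ContDiff ℝ (⊤ : ℕ∞) (H s)) ∧
  (∀ s t : ℝ, deriv (H s) t ≠ 0) ∧
  H 0 = f ∧ H 1 = g

/-- Two planar curves are regularly homotopic. -/
def RegularlyHomotopic (c c' : PlanarCurve) : Prop :=
  ∃ H, IsRegHomotopy c.toFun c'.toFun H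

/-- Two planar curves are homotopic through *stable* immersed curves. -/
def StablyHomotopic (c c' : PlanarCurve) : Prop :=
  ∃ H, IsRegHomotopy c.toFun c'.toFun H ∧ ∀ s ∈ Set.Icc (0:ℝ) 1, StableF (H s)

/-- A point of a curve which is either a regular point or a transverse double point. -/
def StablePointF (f : ℝ → ℂ) (p : ℂ) : Prop :=
  multF f p ≤ 1 ∨ (multF f p = 2 ∧ TransverseF f p)

/-- A curve exhibiting a single `J`-type singularity (a first-order tangency of two
strands), all other points being stable. -/
def JSingF (f : ℝ → ℂ) : Prop :=
  ∃ p : ℂ, multF f p = 2 ∧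
    (∀ s ∈ Set.Ico (0:ℝ) 1, ∀ t ∈ Set.Ico (0:ℝ) 1, s ≠ t → f s = p → f t = p →
      ∃ r : ℝ, r ≠ 0 ∧ deriv f t = (r : ℂ) * deriv f s ∧
        det2 (deriv f s) (iteratedDeriv 2 f s) * ‖deriv f t‖ ^ 3 ≠
          (if 0 < r then 1 else -1) * det2 (deriv f t) (iteratedDeriv 2 f t) * ‖deriv f s‖ ^ 3) ∧
    (∀ q : ℂ, q ≠ p → StablePointF f q) ∧ (crossingSetF f).Finite

/-- A curve exhibiting a single `S`-type singularity (three strands meeting at one point,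
pairwise transversally), all other points being stable. -/
def SSingF (f : ℝ → ℂ) : Prop :=
  ∃ p : ℂ, multF f p = 3 ∧ TransverseF f p ∧
    (∀ q : ℂ, q ≠ p → StablePointF f q) ∧ (crossingSetF f).Finite

/-- A `J` move: a regular homotopy between stable curves passing through exactly one
singular moment, of `J`-type. -/
def JMove (c c' : PlanarCurve) : Prop :=
  c.Stable ∧ c'.Stable ∧ ∃ H, IsRegHomotopy c.toFun c'.toFun H ∧
    ∃ s₀ ∈ Set.Ioo (0:ℝ) 1, (∀ s ∈ Set.Icc (0:ℝ) 1, s ≠ s₀ → StableF (H s)) ∧ JSingF (H s₀)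

/-- An `S` move: a regular homotopy between stable curves passing through exactly one
singular moment, of `S`-type. -/
def SMove (c c' : PlanarCurve) : Prop :=
  c.Stable ∧ c'.Stable ∧ ∃ H, IsRegHomotopy c.toFun c'.toFun H ∧
    ∃ s₀ ∈ Set.Ioo (0:ℝ) 1, (∀ s ∈ Set.Icc (0:ℝ) 1, s ≠ s₀ → StableF (H s)) ∧ SSingF (H s₀)

/-- A basic move is a `J` move or an `S` move. -/
def BasicMove (c c' : PlanarCurve) : Prop := JMove c c' ∨ SMove c c'

/-- An increasing `J` move adds two crossings. -/
def IncreasingJMove (c c' : PlanarCurve) : Prop :=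
  JMove c c' ∧ c'.crossings = c.crossings + 2

/-- A decreasing `J` move removes two crossings. -/
def DecreasingJMove (c c' : PlanarCurve) : Prop :=
  JMove c c' ∧ c.crossings = c'.crossings + 2

/-- A `Z` move: the composite of an increasing `J` move, an `S` move and a decreasing
`J` move (sliding an empty 1-gon past a transverse strand). -/
def ZMove (c c' : PlanarCurve) : Prop :=
  ∃ c₁ c₂, IncreasingJMove c c₁ ∧ SMove c₁ c₂ ∧ DecreasingJMove c₂ c'

/-- A sequence of `k` basic moves leading from `c` to `c'` (allowing an initial
deformation through stable curves). -/
def ChainFromTo (c c' : PlanarCurve) (seq : ℕ → PlanarCurve) (k : ℕ) : Prop :=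
  StablyHomotopic c (seq 0) ∧ seq k = c' ∧ ∀ i < k, BasicMove (seq i) (seq (i+1))

/-- The distance between two curves: the minimal number of basic moves needed to pass
from `c` to `c'` (`⊤` if they are not regularly homotopic). -/
def dist (c c' : PlanarCurve) : ℕ∞ :=
  sInf {m : ℕ∞ | ∃ k : ℕ, m = (k : ℕ∞) ∧ ∃ seq : ℕ → PlanarCurve, ChainFromTo c c' seq k}

/-- The diameter of a set of curves. -/
def diam (A : Set PlanarCurve) : ℕ∞ := ⨆ c ∈ A, ⨆ c' ∈ A, dist c c'

/-- `B^ω_n`: the set of all stable planar curves with Whitney number `ω` and at most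
`n` crossings. -/
def B (ω : ℤ) (n : ℕ) : Set PlanarCurve :=
  {c : PlanarCurve | c.Stable ∧ c.HasWhitney ω ∧ c.crossings ≤ n}

/-- A step of the algorithm: an `S` move, a decreasing `J` move, or a `Z` move whose two
intermediate curves have at most `N` crossings; `w` is the number of basic moves used. -/
def AlgStep (N : ℕ) (c c' : PlanarCurve) (w : ℕ) : Prop :=
  (SMove c c' ∧ w = 1) ∨ (DecreasingJMove c c' ∧ w = 1) ∨
  ((∃ c₁ c₂, IncreasingJMove c c₁ ∧ SMove c₁ c₂ ∧ DecreasingJMove c₂ c' ∧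
      c₁.crossings ≤ N ∧ c₂.crossings ≤ N) ∧ w = 3)

/-! #### The invariant `f^X` -/

/-- The set of parameter pairs (in one period) realizing the double points of a curve. -/
def crossingPairsF (f : ℝ → ℂ) : Set (ℝ × ℝ) :=
  {q : ℝ × ℝ | q.1 ∈ Set.Ico (0:ℝ) 1 ∧ q.2 ∈ Set.Ico (0:ℝ) 1 ∧ q.1 < q.2 ∧ f q.1 = f q.2}

/-- The sign `i(v) ∈ {1,-1}` of a double point visited first at time `s` and then at
time `t`: `1` iff the tangents, in the order visited, form a positive basis. -/
def crossSign (f : ℝ → ℂ) (s t : ℝ) : ℤ :=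
  if 0 < det2 (deriv f s) (deriv f t) then 1 else -1

/-- The index `i(e)` of the subarc `e` of `f` on the parameter interval `(α, β)`:
the sum of the signs of the double points of `e`. -/
def arcIndex (f : ℝ → ℂ) (α β : ℝ) : ℤ :=
  ∑ᶠ q ∈ {q : ℝ × ℝ | q.1 ∈ Set.Ioo α β ∧ q.2 ∈ Set.Ioo α β ∧ q.1 < q.2 ∧ f q.1 = f q.2},
    crossSign f q.1 q.2

/-- The order one invariant `f^X(c) = ∑_v X_{a(v),b(v)} ∈ 𝕏`, where for each double
point `v` the two arcs of `c` based at `v` are ordered by the orientation of the tangents. -/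
def fX (c : PlanarCurve) : FreeAbelianGroup (ℤ × ℤ) :=
  ∑ᶠ q ∈ crossingPairsF c.toFun,
    if 0 < det2 (deriv c.toFun q.1) (deriv c.toFun q.2) then
      FreeAbelianGroup.of (arcIndex c.toFun q.1 q.2, arcIndex c.toFun q.2 (q.1 + 1))
    else
      FreeAbelianGroup.of (arcIndex c.toFun q.2 (q.1 + 1), arcIndex c.toFun q.1 q.2)

/-- The integer valued invariant `g = φ ∘ f^X`. -/
def g (c : PlanarCurve) : ℤ := phi (fX c)

/-! #### The standard curves `δ_ω` -/

/-- An explicit stable curve with winding number `m ≥ 1` and `m - 1` (inward) loops. -/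
def deltaFunPos (m : ℕ) : ℝ → ℂ := fun t =>
  Complex.exp (((2 * Real.pi * (m : ℝ) * t : ℝ) : ℂ) * Complex.I) +
    ((2 * (m : ℝ) / 3 : ℝ) : ℂ) * Complex.exp (((2 * Real.pi * t : ℝ) : ℂ) * Complex.I)

/-- The standard planar curve `δ_ω` with Whitney number `ω` and `||ω|-1|` crossings:
for `ω = 0` a figure eight, and for `ω ≠ 0` a round circle with `|ω| - 1` small loops. -/
def deltaFun (ω : ℤ) : ℝ → ℂ :=
  if ω = 0 then
    fun t => ((Real.sin (2 * Real.pi * t) : ℝ) : ℂ) + ((Real.sin (4 * Real.pi * t) : ℝ) : ℂ) * Complex.I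
  else if 0 < ω then deltaFunPos ω.toNat
  else fun t => (starRingEnd ℂ) (deltaFunPos (-ω).toNat t)

end PlanarCurve


/-! ### Spherical curves -/


/-- A closed spherical curve: a smooth immersion of the circle `ℝ/ℤ` into the unit
sphere `S² ⊆ ℝ³`. -/
structure SphericalCurve : Type where
  toFun : ℝ → EuclideanSpace ℝ (Fin 3)
  norm_one : ∀ t : ℝ, ‖toFun t‖ = 1
  periodic : Function.Periodic toFun 1
  smooth : ContDiff ℝ (⊤ : ℕ∞) toFun
  immersion : ∀ t : ℝ, deriv toFun t ≠ 0

namespace SphericalCurve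

def multF (f : ℝ → EuclideanSpace ℝ (Fin 3)) (p : EuclideanSpace ℝ (Fin 3)) : ℕ :=
  Set.ncard {t ∈ Set.Ico (0:ℝ) 1 | f t = p}

/-- Transversality of the branches at `p`: tangent vectors at `p` are pairwise
independent, detected by the `3×3` determinant with the base point `p` (the outward
normal of the sphere, fixing its orientation). -/
def TransverseF (f : ℝ → EuclideanSpace ℝ (Fin 3)) (p : EuclideanSpace ℝ (Fin 3)) : Prop :=
  ∀ s ∈ Set.Ico (0:ℝ) 1, ∀ t ∈ Set.Ico (0:ℝ) 1, s ≠ t → f s = p → f t = p →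
    det3 p (deriv f s) (deriv f t) ≠ 0

def crossingSetF (f : ℝ → EuclideanSpace ℝ (Fin 3)) : Set (EuclideanSpace ℝ (Fin 3)) :=
  {p | 2 ≤ multF f p}

def StableF (f : ℝ → EuclideanSpace ℝ (Fin 3)) : Prop :=
  (crossingSetF f).Finite ∧ ∀ p, multF f p ≤ 2 ∧ (multF f p = 2 → TransverseF f p)

def Stable (c : SphericalCurve) : Prop := StableF c.toFun

def crossings (c : SphericalCurve) : ℕ := (crossingSetF c.toFun).ncard

/-- The curve as a map into the sphere as a subtype. -/
def pt (c : SphericalCurve) (t : ℝ) : Metric.sphere (0 : EuclideanSpace ℝ (Fin 3)) 1 :=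
  ⟨c.toFun t, mem_sphere_zero_iff_norm.mpr (c.norm_one t)⟩

/-- The planar curve obtained from `c` by deleting the point `v ∈ S²` not on `c`
(stereographic projection from `v`). -/
def proj (c : SphericalCurve) (v : Metric.sphere (0 : EuclideanSpace ℝ (Fin 3)) 1) :
    ℝ → EuclideanSpace ℝ (Fin 2) :=
  haveI : Fact (Module.finrank ℝ (EuclideanSpace ℝ (Fin 3)) = 2 + 1) := ⟨by simp⟩
  fun t => stereographic' 2 v (c.pt t)

/-- `c` has (spherical) Whitney number `ω ∈ ℤ/2`: the parity of the winding number of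
the planar curve obtained by deleting from `S²` a point in the complement of `c`. -/
def HasWhitney (c : SphericalCurve) (ω : ZMod 2) : Prop :=
  ∃ v : Metric.sphere (0 : EuclideanSpace ℝ (Fin 3)) 1,
    (∀ t : ℝ, c.toFun t ≠ (v : EuclideanSpace ℝ (Fin 3))) ∧
    ∃ (m : ℤ) (θ : ℝ → ℝ), Continuous θ ∧
      (∀ t : ℝ, deriv (c.proj v) t =
        ‖deriv (c.proj v) t‖ •
          ((WithLp.equiv 2 (Fin 2 → ℝ)).symm ![Real.cos (θ t), Real.sin (θ t)])) ∧
      θ 1 - θ 0 = 2 * Real.pi * (m : ℝ) ∧ ω = (m : ZMod 2)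

def IsRegHomotopy (f g : ℝ → EuclideanSpace ℝ (Fin 3))
    (H : ℝ → ℝ → EuclideanSpace ℝ (Fin 3)) : Prop :=
  (Continuous fun q : ℝ × ℝ => H q.1 q.2) ∧
  (Continuous fun q : ℝ × ℝ => deriv (H q.1) q.2) ∧
  (∀ s t : ℝ, ‖H s t‖ = 1) ∧
  (∀ s : ℝ, Function.Periodic (H s) 1) ∧
  (∀ s : ℝ, ContDiff ℝ (⊤ : ℕ∞) (H s)) ∧
  (∀ s t : ℝ, deriv (H s) t ≠ 0) ∧
  H 0 = f ∧ H 1 = g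

def RegularlyHomotopic (c c' : SphericalCurve) : Prop :=
  ∃ H, IsRegHomotopy c.toFun c'.toFun H

def StablyHomotopic (c c' : SphericalCurve) : Prop :=
  ∃ H, IsRegHomotopy c.toFun c'.toFun H ∧ ∀ s ∈ Set.Icc (0:ℝ) 1, StableF (H s)

def StablePointF (f : ℝ → EuclideanSpace ℝ (Fin 3)) (p : EuclideanSpace ℝ (Fin 3)) : Prop :=
  multF f p ≤ 1 ∨ (multF f p = 2 ∧ TransverseF f p)

def JSingF (f : ℝ → EuclideanSpace ℝ (Fin 3)) : Prop :=
  ∃ p : EuclideanSpace ℝ (Fin 3), multF f p = 2 ∧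
    (∀ s ∈ Set.Ico (0:ℝ) 1, ∀ t ∈ Set.Ico (0:ℝ) 1, s ≠ t → f s = p → f t = p →
      ∃ r : ℝ, r ≠ 0 ∧ deriv f t = r • deriv f s ∧
        det3 p (deriv f s) (iteratedDeriv 2 f s) * ‖deriv f t‖ ^ 3 ≠
          (if 0 < r then 1 else -1) * det3 p (deriv f t) (iteratedDeriv 2 f t) * ‖deriv f s‖ ^ 3) ∧
    (∀ q, q ≠ p → StablePointF f q) ∧ (crossingSetF f).Finite

def SSingF (f : ℝ → EuclideanSpace ℝ (Fin 3)) : Prop :=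
  ∃ p : EuclideanSpace ℝ (Fin 3), multF f p = 3 ∧ TransverseF f p ∧
    (∀ q, q ≠ p → StablePointF f q) ∧ (crossingSetF f).Finite

def JMove (c c' : SphericalCurve) : Prop :=
  c.Stable ∧ c'.Stable ∧ ∃ H, IsRegHomotopy c.toFun c'.toFun H ∧
    ∃ s₀ ∈ Set.Ioo (0:ℝ) 1, (∀ s ∈ Set.Icc (0:ℝ) 1, s ≠ s₀ → StableF (H s)) ∧ JSingF (H s₀)

def SMove (c c' : SphericalCurve) : Prop :=
  c.Stable ∧ c'.Stable ∧ ∃ H, IsRegHomotopy c.toFun c'.toFun H ∧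
    ∃ s₀ ∈ Set.Ioo (0:ℝ) 1, (∀ s ∈ Set.Icc (0:ℝ) 1, s ≠ s₀ → StableF (H s)) ∧ SSingF (H s₀)

def BasicMove (c c' : SphericalCurve) : Prop := JMove c c' ∨ SMove c c'

def IncreasingJMove (c c' : SphericalCurve) : Prop :=
  JMove c c' ∧ c'.crossings = c.crossings + 2

def DecreasingJMove (c c' : SphericalCurve) : Prop :=
  JMove c c' ∧ c.crossings = c'.crossings + 2

def ZMove (c c' : SphericalCurve) : Prop :=
  ∃ c₁ c₂, IncreasingJMove c c₁ ∧ SMove c₁ c₂ ∧ DecreasingJMove c₂ c'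

def ChainFromTo (c c' : SphericalCurve) (seq : ℕ → SphericalCurve) (k : ℕ) : Prop :=
  StablyHomotopic c (seq 0) ∧ seq k = c' ∧ ∀ i < k, BasicMove (seq i) (seq (i+1))

def dist (c c' : SphericalCurve) : ℕ∞ :=
  sInf {m : ℕ∞ | ∃ k : ℕ, m = (k : ℕ∞) ∧ ∃ seq : ℕ → SphericalCurve, ChainFromTo c c' seq k}

def diam (A : Set SphericalCurve) : ℕ∞ := ⨆ c ∈ A, ⨆ c' ∈ A, dist c c'

def B (ω : ZMod 2) (n : ℕ) : Set SphericalCurve :=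
  {c : SphericalCurve | c.Stable ∧ c.HasWhitney ω ∧ c.crossings ≤ n}

def AlgStep (N : ℕ) (c c' : SphericalCurve) (w : ℕ) : Prop :=
  (SMove c c' ∧ w = 1) ∨ (DecreasingJMove c c' ∧ w = 1) ∨
  ((∃ c₁ c₂, IncreasingJMove c c₁ ∧ SMove c₁ c₂ ∧ DecreasingJMove c₂ c' ∧
      c₁.crossings ≤ N ∧ c₂.crossings ≤ N) ∧ w = 3)

/-! #### The invariant `f^X` for spherical curves -/

def crossingPairsF (f : ℝ → EuclideanSpace ℝ (Fin 3)) : Set (ℝ × ℝ) :=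
  {q : ℝ × ℝ | q.1 ∈ Set.Ico (0:ℝ) 1 ∧ q.2 ∈ Set.Ico (0:ℝ) 1 ∧ q.1 < q.2 ∧ f q.1 = f q.2}

def crossSign (f : ℝ → EuclideanSpace ℝ (Fin 3)) (s t : ℝ) : ℤ :=
  if 0 < det3 (f s) (deriv f s) (deriv f t) then 1 else -1

def arcIndex (f : ℝ → EuclideanSpace ℝ (Fin 3)) (α β : ℝ) : ℤ :=
  ∑ᶠ q ∈ {q : ℝ × ℝ | q.1 ∈ Set.Ioo α β ∧ q.2 ∈ Set.Ioo α β ∧ q.1 < q.2 ∧ f q.1 = f q.2},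
    crossSign f q.1 q.2

def fX (c : SphericalCurve) : FreeAbelianGroup (ℤ × ℤ) :=
  ∑ᶠ q ∈ crossingPairsF c.toFun,
    if 0 < det3 (c.toFun q.1) (deriv c.toFun q.1) (deriv c.toFun q.2) then
      FreeAbelianGroup.of (arcIndex c.toFun q.1 q.2, arcIndex c.toFun q.2 (q.1 + 1))
    else
      FreeAbelianGroup.of (arcIndex c.toFun q.2 (q.1 + 1), arcIndex c.toFun q.1 q.2)

def g (c : SphericalCurve) : ℤ := phi (fX c)

/-- Inverse stereographic projection `ℂ → S²` from the north pole. -/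
def stereoInv (z : ℂ) : EuclideanSpace ℝ (Fin 3) :=
  (WithLp.equiv 2 (Fin 3 → ℝ)).symm
    ![2 * z.re / (Complex.normSq z + 1), 2 * z.im / (Complex.normSq z + 1),
      (Complex.normSq z - 1) / (Complex.normSq z + 1)]

/-- The standard spherical curves `δ_0` (one crossing) and `δ_1` (embedded):
the images in `S²` of the standard planar curves `δ_0`, `δ_1`. -/
def deltaFun (ω : ZMod 2) : ℝ → EuclideanSpace ℝ (Fin 3) :=
  fun t => stereoInv (PlanarCurve.deltaFun (if ω = 0 then 0 else 1) t)

end SphericalCurve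


/-- The determinant of two vectors in `ℝ × ℝ`. -/
def det2P (u v : ℝ × ℝ) : ℝ := u.1 * v.2 - u.2 * v.1

/-- The closed region bounded by a subset of the plane: the set together with all the
bounded connected components of its complement. -/
def closedRegion (S : Set ℂ) : Set ℂ :=
  S ∪ {p : ℂ | p ∉ S ∧ Bornology.IsBounded (connectedComponentIn Sᶜ p)}

/-!
The curve is written in polar coordinates around the circle of radius `2`. Near the parameter `0` it
dips into the circle and makes `k` additional turns. The radius is even and the angle is odd there,
so this spiral meets its mirror image exactly where the angle is an interior multiple of `π`, which
gives `k` crossings whose parameter intervals are nested. On the rest of the circle it carries `l`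
lobes of larger radius, along which the angle oscillates, so that each lobe crosses itself once. The
two families have disjoint radii and all crossings have the same sign, so `f^X` only depends on the
nesting of the parameter intervals. For the winding number, the velocity divided by
`exp (i (φ + π / 2 - l x))`, where `φ` is the polar angle at the parameter `x`, avoids the negative
real axis, so the tangent turns as often as `φ - l x`, namely `k + 1 - l` times.
-/

/-! ### Curves with positive crossings -/

lemma det2_swap (u v : ℂ) : det2 u v = -det2 v u := by
  simp only [det2]
  ring

lemma finsum_mem_image_eq_mul_card {ι α : Type*} [Fintype ι] {F : ι → α}
    (hF : Function.Injective F) (P : ι → Prop) [DecidablePred P] {v : α → ℤ} {ε : ℤ}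
    (hv : ∀ i, P i → v (F i) = ε) :
    ∑ᶠ q ∈ F '' {i | P i}, v q = ε * (Finset.univ.filter P).card := by
  have hfilter : {i | P i} = ((Finset.univ.filter P : Finset ι) : Set ι) := by simp
  rw [finsum_mem_image hF.injOn, hfilter, finsum_mem_coe_finset,
    Finset.sum_congr rfl fun i hi => hv i (Finset.mem_filter.mp hi).2,
    Finset.sum_const, nsmul_eq_mul, mul_comm]

lemma card_filter_sum {α β : Type*} [Fintype α] [Fintype β] (P : α ⊕ β → Prop)
    [DecidablePred P] :
    (Finset.univ.filter P).card = (Finset.univ.filter fun x => P (.inl x)).card +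
      (Finset.univ.filter fun y => P (.inr y)).card := by
  simp only [Finset.card_filter, Fintype.sum_sum_type]

namespace PlanarCurve

lemma periodic_deriv (c : PlanarCurve) : Function.Periodic (deriv c.toFun) 1 := fun t => by
  rw [← deriv_comp_add_const, c.periodic.funext]

lemma crossSign_eq_one {f : ℝ → ℂ} {s t : ℝ} (h : 0 < det2 (deriv f s) (deriv f t)) :
    crossSign f s t = 1 :=
  if_pos h

lemma crossSign_eq_neg_one {f : ℝ → ℂ} {s t : ℝ} (h : 0 < det2 (deriv f t) (deriv f s)) :
    crossSign f s t = -1 :=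
  if_neg (by rw [det2_swap]; linarith)

/-- A complete list of the double points of `c`, the `i`-th being visited at the times
`first i < second i` of the fundamental period `[0, 1)`, all of them positive: the tangents in the
order visited form a positive basis. No two entries share a visiting time, so there are no triple
points. -/
structure IsPositiveCrossingEnumeration {ι : Type*} (c : PlanarCurve) (first second : ι → ℝ) :
    Prop where
  first_injective : Function.Injective first
  first_pos : ∀ i, 0 < first i
  first_lt_second : ∀ i, first i < second i
  second_lt_one : ∀ i, second i < 1
  first_ne_second : ∀ i j, first i ≠ second j
  eq_iff : ∀ {s t : ℝ}, 0 ≤ s → s < t → t < 1 →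
    (c.toFun s = c.toFun t ↔ ∃ i, first i = s ∧ second i = t)
  det2_pos : ∀ i, 0 < det2 (deriv c.toFun (first i)) (deriv c.toFun (second i))

namespace IsPositiveCrossingEnumeration

variable {ι : Type*} {c : PlanarCurve} {first second : ι → ℝ}

lemma first_mem_Ico (h : IsPositiveCrossingEnumeration c first second) (i : ι) :
    first i ∈ Ico (0 : ℝ) 1 :=
  ⟨(h.first_pos i).le, (h.first_lt_second i).trans (h.second_lt_one i)⟩

lemma second_mem_Ico (h : IsPositiveCrossingEnumeration c first second) (i : ι) :
    second i ∈ Ico (0 : ℝ) 1 :=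
  ⟨((h.first_pos i).trans (h.first_lt_second i)).le, h.second_lt_one i⟩

lemma toFun_first_eq (h : IsPositiveCrossingEnumeration c first second) (i : ι) :
    c.toFun (first i) = c.toFun (second i) :=
  (h.eq_iff (h.first_pos i).le (h.first_lt_second i) (h.second_lt_one i)).mpr ⟨i, rfl, rfl⟩

lemma fiber_eq (h : IsPositiveCrossingEnumeration c first second) (i : ι) :
    {t ∈ Ico (0 : ℝ) 1 | c.toFun t = c.toFun (first i)} = {first i, second i} := by
  apply Subset.antisymm
  · rintro t ⟨⟨ht0, ht1⟩, ht⟩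
    rcases lt_trichotomy t (first i) with hlt | rfl | hgt
    · obtain ⟨j, -, hj⟩ := (h.eq_iff ht0 hlt (h.first_mem_Ico i).2).mp ht
      exact absurd hj.symm (h.first_ne_second i j)
    · exact mem_insert _ _
    · obtain ⟨j, hj, rfl⟩ := (h.eq_iff (h.first_pos i).le hgt ht1).mp ht.symm
      rw [h.first_injective hj]
      exact mem_insert_of_mem _ rfl
  · rintro t (rfl | rfl)
    · exact ⟨h.first_mem_Ico i, rfl⟩
    · exact ⟨h.second_mem_Ico i, (h.toFun_first_eq i).symm⟩

lemma multF_first (h : IsPositiveCrossingEnumeration c first second) (i : ι) :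
    multF c.toFun (c.toFun (first i)) = 2 := by
  rw [multF, h.fiber_eq, ncard_pair (h.first_lt_second i).ne]

lemma crossingSetF_eq (h : IsPositiveCrossingEnumeration c first second) :
    crossingSetF c.toFun = range (c.toFun ∘ first) := by
  apply Subset.antisymm
  · intro p hp
    obtain ⟨s, ⟨hs, hsp⟩, t, ⟨ht, htp⟩, hst⟩ :=
      (one_lt_ncard_iff_nontrivial_and_finite.mp (Nat.lt_of_succ_le hp)).1
    wlog hlt : s < t generalizing s t
    · exact this t ht htp s hst.symm hs hsp (hst.lt_or_gt.resolve_left hlt)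
    obtain ⟨i, rfl, -⟩ := (h.eq_iff hs.1 hlt ht.2).mp (hsp.trans htp.symm)
    exact ⟨i, hsp⟩
  · rintro _ ⟨i, rfl⟩
    exact (h.multF_first i).ge

lemma transverseF (h : IsPositiveCrossingEnumeration c first second) (i : ι) :
    TransverseF c.toFun (c.toFun (first i)) := by
  have mem_pair : ∀ t ∈ Ico (0 : ℝ) 1, c.toFun t = c.toFun (first i) →
      t = first i ∨ t = second i := fun t ht hft =>
    (h.fiber_eq i).subset ⟨ht, hft⟩
  intro s hs t ht hst hsp htp
  rcases mem_pair s hs hsp with rfl | rfl <;> rcases mem_pair t ht htp with rfl | rfl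
  · exact absurd rfl hst
  · exact (h.det2_pos i).ne'
  · rw [det2_swap]
    exact (neg_neg_of_pos (h.det2_pos i)).ne
  · exact absurd rfl hst

lemma stable [Finite ι] (h : IsPositiveCrossingEnumeration c first second) : c.Stable := by
  refine ⟨h.crossingSetF_eq ▸ finite_range _, fun p => ?_⟩
  by_cases hp : 2 ≤ multF c.toFun p
  · obtain ⟨i, rfl⟩ := h.crossingSetF_eq.subset hp
    exact ⟨(h.multF_first i).le, fun _ => h.transverseF i⟩
  · exact ⟨(not_le.mp hp).le, fun heq => absurd heq.ge hp⟩

lemma injective_toFun_first (h : IsPositiveCrossingEnumeration c first second) :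
    Function.Injective (c.toFun ∘ first) := by
  intro i j hij
  have hj : first j ∈ ({first i, second i} : Set ℝ) := by
    rw [← h.fiber_eq i]
    exact ⟨h.first_mem_Ico j, hij.symm⟩
  exact h.first_injective (hj.resolve_right (h.first_ne_second j i)).symm

lemma crossings_eq (h : IsPositiveCrossingEnumeration c first second) :
    c.crossings = Nat.card ι := by
  rw [crossings, h.crossingSetF_eq, ← image_univ,
    ncard_image_of_injective _ h.injective_toFun_first, ncard_univ]

lemma crossingPairsF_eq (h : IsPositiveCrossingEnumeration c first second) :
    crossingPairsF c.toFun = range fun i => (first i, second i) := by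
  ext ⟨s, t⟩
  constructor
  · rintro ⟨hs, ht, hst, heq⟩
    obtain ⟨i, rfl, rfl⟩ := (h.eq_iff hs.1 hst ht.2).mp heq
    exact ⟨i, rfl⟩
  · rintro ⟨i, hi⟩
    obtain ⟨rfl, rfl⟩ := Prod.mk.inj hi
    exact ⟨h.first_mem_Ico i, h.second_mem_Ico i, h.first_lt_second i, h.toFun_first_eq i⟩

lemma fX_eq [Fintype ι] (h : IsPositiveCrossingEnumeration c first second) :
    fX c = ∑ i, FreeAbelianGroup.of
      (arcIndex c.toFun (first i) (second i), arcIndex c.toFun (second i) (first i + 1)) := by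
  have hinj : Function.Injective fun i => (first i, second i) := fun i j hij =>
    h.first_injective (congrArg Prod.fst hij)
  rw [fX, h.crossingPairsF_eq, finsum_mem_range hinj, finsum_eq_sum_of_fintype]
  exact Finset.sum_congr rfl fun i _ => if_pos (h.det2_pos i)

lemma arcIndex_first_second [Fintype ι] (h : IsPositiveCrossingEnumeration c first second)
    (i : ι) :
    arcIndex c.toFun (first i) (second i) =
      (Finset.univ.filter fun j => first i < first j ∧ second j < second i).card := by
  have hpairs : {q : ℝ × ℝ | q.1 ∈ Ioo (first i) (second i) ∧ q.2 ∈ Ioo (first i) (second i) ∧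
      q.1 < q.2 ∧ c.toFun q.1 = c.toFun q.2} =
      (fun j => (first j, second j)) '' {j | first i < first j ∧ second j < second i} := by
    ext ⟨s, t⟩
    constructor
    · rintro ⟨hs, ht, hst, heq⟩
      obtain ⟨j, rfl, rfl⟩ :=
        (h.eq_iff ((h.first_pos i).trans hs.1).le hst (ht.2.trans (h.second_lt_one i))).mp heq
      exact ⟨j, ⟨hs.1, ht.2⟩, rfl⟩
    · rintro ⟨j, ⟨hfirst, hsecond⟩, hj⟩
      obtain ⟨rfl, rfl⟩ := Prod.mk.inj hj
      have hj := h.first_lt_second j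
      exact ⟨⟨hfirst, hj.trans hsecond⟩, ⟨hfirst.trans hj, hsecond⟩, hj, h.toFun_first_eq j⟩
  rw [arcIndex, hpairs, finsum_mem_image_eq_mul_card (ε := 1)
    (fun _ _ hij => h.first_injective (congrArg Prod.fst hij)) _
    fun j _ => crossSign_eq_one (h.det2_pos j), one_mul]

lemma outerPairs_eq (h : IsPositiveCrossingEnumeration c first second) (i : ι) :
    {q : ℝ × ℝ | q.1 ∈ Ioo (second i) (first i + 1) ∧ q.2 ∈ Ioo (second i) (first i + 1) ∧
      q.1 < q.2 ∧ c.toFun q.1 = c.toFun q.2} =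
      (fun j => (first j, second j)) '' {j | second i < first j} ∪
      (fun j => (first j + 1, second j + 1)) '' {j | second j < first i} ∪
      (fun j => (second j, first j + 1)) '' {j | first j < first i ∧ second i < second j} := by
  have hi0 := h.first_pos i
  have hi := h.first_lt_second i
  have hi1 := h.second_lt_one i
  ext ⟨s, t⟩
  constructor
  · rintro ⟨⟨hs, -⟩, ⟨-, ht⟩, hst, heq⟩
    dsimp only at hs ht hst heq
    have ht_shift := c.periodic.sub_eq t
    rcases lt_or_ge t 1 with ht1 | ht1
    · obtain ⟨j, rfl, rfl⟩ := (h.eq_iff (by linarith) hst ht1).mp heq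
      exact .inl (.inl ⟨j, hs, rfl⟩)
    rcases lt_or_ge s 1 with hs1 | hs1
    · obtain ⟨j, hj, rfl⟩ := (h.eq_iff (s := t - 1) (by linarith) (by linarith) hs1).mp
        (ht_shift.trans heq.symm)
      exact .inr ⟨j, ⟨by linarith, hs⟩, Prod.ext rfl (by linarith)⟩
    · obtain ⟨j, hj, hj'⟩ := (h.eq_iff (s := s - 1) (t := t - 1) (by linarith) (by linarith)
        (by linarith)).mp ((c.periodic.sub_eq s).trans (heq.trans ht_shift.symm))
      exact .inl (.inr ⟨j, mem_ofPred.mpr (by linarith), Prod.ext (by linarith) (by linarith)⟩)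
  · have shift := c.periodic
    rintro ((⟨j, hj, hst⟩ | ⟨j, hj, hst⟩) | ⟨j, ⟨hj, hj'⟩, hst⟩) <;>
      obtain ⟨rfl, rfl⟩ := Prod.mk.inj hst <;>
      have hj0 := h.first_pos j <;> have hjj := h.first_lt_second j <;>
      have hj1 := h.second_lt_one j <;> have heq := h.toFun_first_eq j
    · simp only [mem_ofPred] at hj
      exact ⟨⟨hj, by linarith⟩, ⟨by linarith, by linarith⟩, hjj, heq⟩
    · simp only [mem_ofPred] at hj
      exact ⟨⟨by linarith, by linarith⟩, ⟨by linarith, by linarith⟩, by simpa using hjj,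
        by simpa only [shift _] using heq⟩
    · exact ⟨⟨hj', by linarith⟩, ⟨by linarith, by linarith⟩,
        show second j < first j + 1 by linarith, by simpa only [shift _] using heq.symm⟩

lemma second_injective (h : IsPositiveCrossingEnumeration c first second) :
    Function.Injective second := fun i j hij =>
  h.injective_toFun_first <| by
    simp only [Function.comp_apply, h.toFun_first_eq, hij]

lemma arcIndex_second_first_add_one [Fintype ι]
    (h : IsPositiveCrossingEnumeration c first second) (i : ι) :
    arcIndex c.toFun (second i) (first i + 1) =
      (Finset.univ.filter fun j => second i < first j).card +
      (Finset.univ.filter fun j => second j < first i).card -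
      (Finset.univ.filter fun j => first j < first i ∧ second i < second j).card := by
  have hfirst := h.first_injective
  have shift := c.periodic_deriv
  rw [arcIndex, h.outerPairs_eq, finsum_mem_union _ (toFinite _) (toFinite _),
    finsum_mem_union _ (toFinite _) (toFinite _),
    finsum_mem_image_eq_mul_card (ε := 1) (fun _ _ hij => hfirst (congrArg Prod.fst hij))
      (fun j => second i < first j),
    finsum_mem_image_eq_mul_card (ε := 1)
      (fun _ _ hij => hfirst (add_right_cancel (congrArg Prod.fst hij)))
      (fun j => second j < first i),
    finsum_mem_image_eq_mul_card (ε := -1)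
      (fun _ _ hij => h.second_injective (congrArg Prod.fst hij))
      (fun j => first j < first i ∧ second i < second j)]
  · ring
  · exact fun j _ => crossSign_eq_neg_one (by simpa only [shift _] using h.det2_pos j)
  · exact fun j _ => crossSign_eq_one (by simpa only [shift _] using h.det2_pos j)
  · exact fun j _ => crossSign_eq_one (h.det2_pos j)
  · rw [disjoint_left]
    rintro _ ⟨j, -, rfl⟩ ⟨m, -, hm⟩
    linarith [congrArg Prod.fst hm, h.first_pos m, (h.first_mem_Ico j).2]
  · rw [disjoint_union_left, disjoint_left, disjoint_left]
    constructor <;> rintro _ ⟨j, -, rfl⟩ ⟨m, -, hm⟩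
    · linarith [congrArg Prod.snd hm, h.first_pos m, h.second_lt_one j]
    · linarith [congrArg Prod.fst hm, h.first_pos j, h.second_lt_one m]

end IsPositiveCrossingEnumeration

/-- The intervals `[s i, t i]` are nested, the `0`-th being the outermost, and all of them enclose
the intervals `[a j, b j]`, which are pairwise disjoint and listed from left to right. -/
structure IsNestedIntervals {k l : ℕ} (s t : Fin k → ℝ) (a b : Fin l → ℝ) : Prop where
  strictMono_outer_left : StrictMono s
  strictAnti_outer_right : StrictAnti t
  outer_left_lt_outer_right : ∀ i j, s i < t j
  outer_left_lt_inner_left : ∀ i j, s i < a j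
  inner_right_lt_outer_right : ∀ j i, b j < t i
  inner_left_lt_inner_right : ∀ j, a j < b j
  inner_right_lt_inner_left : ∀ {i j}, i < j → b i < a j

namespace IsNestedIntervals

variable {k l : ℕ} {s t : Fin k → ℝ} {a b : Fin l → ℝ}

lemma outer_left_lt_inner_right (h : IsNestedIntervals s t a b) (i : Fin k) (j : Fin l) :
    s i < b j :=
  (h.outer_left_lt_inner_left i j).trans (h.inner_left_lt_inner_right j)

lemma inner_left_lt_outer_right (h : IsNestedIntervals s t a b) (j : Fin l) (i : Fin k) :
    a j < t i :=
  (h.inner_left_lt_inner_right j).trans (h.inner_right_lt_outer_right j i)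

lemma strictMono_inner_left (h : IsNestedIntervals s t a b) : StrictMono a := fun i _ hij =>
  (h.inner_left_lt_inner_right i).trans (h.inner_right_lt_inner_left hij)

lemma strictMono_inner_right (h : IsNestedIntervals s t a b) : StrictMono b := fun _ j hij =>
  (h.inner_right_lt_inner_left hij).trans (h.inner_left_lt_inner_right j)

lemma inner_right_lt_inner_left_iff (h : IsNestedIntervals s t a b) {i j : Fin l} :
    b i < a j ↔ i < j :=
  ⟨fun hba => h.strictMono_inner_left.lt_iff_lt.mp ((h.inner_left_lt_inner_right i).trans hba),
    h.inner_right_lt_inner_left⟩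

lemma injective_elim (h : IsNestedIntervals s t a b) : Function.Injective (Sum.elim s a) :=
  h.strictMono_outer_left.injective.sumElim h.strictMono_inner_left.injective
    fun i j => (h.outer_left_lt_inner_left i j).ne

lemma elim_lt_elim (h : IsNestedIntervals s t a b) (i : Fin k ⊕ Fin l) :
    Sum.elim s a i < Sum.elim t b i :=
  match i with
  | .inl i => h.outer_left_lt_outer_right i i
  | .inr j => h.inner_left_lt_inner_right j

lemma elim_ne_elim (h : IsNestedIntervals s t a b) (i j : Fin k ⊕ Fin l) :
    Sum.elim s a i ≠ Sum.elim t b j :=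
  match i, j with
  | .inl i, .inl j => (h.outer_left_lt_outer_right i j).ne
  | .inl i, .inr j => (h.outer_left_lt_inner_right i j).ne
  | .inr i, .inl j => (h.inner_left_lt_outer_right i j).ne
  | .inr i, .inr j => by
    rcases le_or_gt i j with hij | hij
    · exact ((h.strictMono_inner_left.monotone hij).trans_lt (h.inner_left_lt_inner_right j)).ne
    · exact (h.inner_right_lt_inner_left hij).ne'

lemma div_const (h : IsNestedIntervals s t a b) {r : ℝ} (hr : 0 < r) :
    IsNestedIntervals (fun i => s i / r) (fun i => t i / r) (fun j => a j / r)
      (fun j => b j / r) where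
  strictMono_outer_left := h.strictMono_outer_left.div_const hr
  strictAnti_outer_right _ _ hij := div_lt_div_of_pos_right (h.strictAnti_outer_right hij) hr
  outer_left_lt_outer_right i j := div_lt_div_of_pos_right (h.outer_left_lt_outer_right i j) hr
  outer_left_lt_inner_left i j := div_lt_div_of_pos_right (h.outer_left_lt_inner_left i j) hr
  inner_right_lt_outer_right j i := div_lt_div_of_pos_right (h.inner_right_lt_outer_right j i) hr
  inner_left_lt_inner_right j := div_lt_div_of_pos_right (h.inner_left_lt_inner_right j) hr
  inner_right_lt_inner_left hij := div_lt_div_of_pos_right (h.inner_right_lt_inner_left hij) hr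

variable {c : PlanarCurve}

lemma arcIndex_outer (h : IsNestedIntervals s t a b)
    (hc : IsPositiveCrossingEnumeration c (Sum.elim s a) (Sum.elim t b)) (i : Fin k) :
    arcIndex c.toFun (s i) (t i) = l + (k - 1 - i : ℕ) := by
  have hcount := hc.arcIndex_first_second (.inl i)
  rw [card_filter_sum] at hcount
  simpa [h.strictMono_outer_left.lt_iff_lt, h.strictAnti_outer_right.lt_iff_gt,
    h.outer_left_lt_inner_left, h.inner_right_lt_outer_right, Finset.filter_lt_eq_Ioi,
    add_comm] using hcount

lemma arcIndex_outer_compl (h : IsNestedIntervals s t a b)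
    (hc : IsPositiveCrossingEnumeration c (Sum.elim s a) (Sum.elim t b)) (i : Fin k) :
    arcIndex c.toFun (t i) (s i + 1) = -i := by
  have hcount := hc.arcIndex_second_first_add_one (.inl i)
  rw [card_filter_sum, card_filter_sum, card_filter_sum] at hcount
  simpa [h.strictMono_outer_left.lt_iff_lt, h.strictAnti_outer_right.lt_iff_gt,
    (h.outer_left_lt_outer_right _ _).not_gt, (h.outer_left_lt_inner_left _ _).not_gt,
    (h.inner_left_lt_outer_right _ _).not_gt, (h.outer_left_lt_inner_right _ _).not_gt,
    Finset.filter_gt_eq_Iio] using hcount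

lemma arcIndex_inner (h : IsNestedIntervals s t a b)
    (hc : IsPositiveCrossingEnumeration c (Sum.elim s a) (Sum.elim t b)) (j : Fin l) :
    arcIndex c.toFun (a j) (b j) = 0 := by
  have hcount := hc.arcIndex_first_second (.inr j)
  rw [card_filter_sum] at hcount
  have hempty : ∀ m, ¬(j < m ∧ m < j) := fun m hm => lt_asymm hm.1 hm.2
  simpa [h.strictMono_inner_left.lt_iff_lt, h.strictMono_inner_right.lt_iff_lt,
    (h.outer_left_lt_inner_left _ _).not_gt, hempty, -not_and, -not_lt] using hcount

lemma arcIndex_inner_compl (h : IsNestedIntervals s t a b)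
    (hc : IsPositiveCrossingEnumeration c (Sum.elim s a) (Sum.elim t b)) (j : Fin l) :
    arcIndex c.toFun (b j) (a j + 1) = l - 1 - k := by
  have hcount := hc.arcIndex_second_first_add_one (.inr j)
  rw [card_filter_sum, card_filter_sum, card_filter_sum] at hcount
  have hempty : ∀ m, ¬(m < j ∧ j < m) := fun m hm => lt_asymm hm.1 hm.2
  have hl := j.isLt
  simp only [Sum.elim_inl, Sum.elim_inr, (h.outer_left_lt_inner_right _ _).not_gt,
    (h.inner_left_lt_outer_right _ _).not_gt, h.outer_left_lt_inner_left,
    h.inner_right_lt_outer_right, h.inner_right_lt_inner_left_iff,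
    h.strictMono_inner_left.lt_iff_lt, h.strictMono_inner_right.lt_iff_lt, hempty,
    Finset.filter_false, Finset.filter_true, Finset.filter_lt_eq_Ioi, Finset.filter_gt_eq_Iio,
    Finset.card_empty, Finset.card_univ, Fin.card_Ioi, Fin.card_Iio, Fintype.card_fin, and_self,
    zero_add, add_zero] at hcount
  omega

lemma fX_eq (h : IsNestedIntervals s t a b)
    (hc : IsPositiveCrossingEnumeration c (Sum.elim s a) (Sum.elim t b)) :
    fX c = (∑ i ∈ Finset.range k, FreeAbelianGroup.of ((l + i : ℤ), ((i : ℤ) + 1 - k))) +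
      (l : ℤ) • FreeAbelianGroup.of ((0 : ℤ), (l : ℤ) - 1 - k) := by
  rw [hc.fX_eq, Fintype.sum_sum_type]
  congr 1
  · rw [← Finset.sum_range_reflect, Finset.sum_range]
    refine Finset.sum_congr rfl fun i _ => ?_
    have hi : ((k - 1 - i : ℕ) : ℤ) + 1 - k = -i := by omega
    rw [Sum.elim_inl, Sum.elim_inl, h.arcIndex_outer hc, h.arcIndex_outer_compl hc, hi]
  · simp [h.arcIndex_inner hc, h.arcIndex_inner_compl hc]

end IsNestedIntervals
end PlanarCurve

/-! ### Curves in polar coordinates -/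

lemma det2_mul_right (u v w : ℂ) : det2 (u * w) (v * w) = det2 u v * Complex.normSq w := by
  simp only [det2, Complex.mul_re, Complex.mul_im, Complex.normSq_apply]
  ring

lemma det2_smul_smul (r : ℝ) (u v : ℂ) : det2 (r • u) (r • v) = r ^ 2 * det2 u v := by
  simp only [det2, Complex.smul_re, Complex.smul_im, smul_eq_mul]
  ring

/-- The plane curve with radius `r` and polar angle `φ`, as functions of a common parameter. -/
def polarCurve (r φ : ℝ → ℝ) (x : ℝ) : ℂ := r x * Complex.exp (φ x * Complex.I)

section polarCurve

variable {r φ : ℝ → ℝ}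

lemma contDiff_polarCurve (hr : ContDiff ℝ (⊤ : ℕ∞) r) (hφ : ContDiff ℝ (⊤ : ℕ∞) φ) :
    ContDiff ℝ (⊤ : ℕ∞) (polarCurve r φ) := by
  have hofReal : ContDiff ℝ (⊤ : ℕ∞) ((↑) : ℝ → ℂ) := Complex.ofRealCLM.contDiff
  exact (hofReal.comp hr).mul ((hofReal.comp hφ).mul contDiff_const).cexp

lemma hasDerivAt_polarCurve {r' φ' x : ℝ} (hr : HasDerivAt r r' x) (hφ : HasDerivAt φ φ' x) :
    HasDerivAt (polarCurve r φ)
      ((r' + r x * φ' * Complex.I) * Complex.exp (φ x * Complex.I)) x := by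
  convert! hr.ofReal_comp.mul (hφ.ofReal_comp.mul_const Complex.I).cexp using 1
  ring

lemma polarCurve_eq_of_eq {x y : ℝ} (hr : r x = r y) {n : ℤ}
    (hφ : φ x = φ y + n * (2 * Real.pi)) : polarCurve r φ x = polarCurve r φ y := by
  rw [polarCurve, polarCurve, hr, hφ,
    ← Complex.exp_periodic.int_mul n ((φ y : ℂ) * Complex.I)]
  push_cast
  ring_nf

lemma polarCurve_eq_iff {x y : ℝ} (hx : 0 < r x) (hy : 0 < r y) :
    polarCurve r φ x = polarCurve r φ y ↔
      r x = r y ∧ ∃ n : ℤ, φ x = φ y + n * (2 * Real.pi) := by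
  refine ⟨fun h => ?_, fun ⟨hr, n, hφ⟩ => polarCurve_eq_of_eq hr hφ⟩
  have hr : r x = r y := by
    simpa [polarCurve, Complex.norm_exp_ofReal_mul_I, abs_of_pos hx, abs_of_pos hy] using
      congrArg (‖·‖) h
  rw [polarCurve, polarCurve, hr, mul_right_inj' (by exact_mod_cast hy.ne'),
    Complex.exp_eq_exp_iff_exists_int] at h
  obtain ⟨n, hn⟩ := h
  exact ⟨hr, n, by simpa using congrArg Complex.im hn⟩

lemma det2_deriv_polarCurve_pos {x y : ℝ} (hr : Differentiable ℝ r) (hφ : Differentiable ℝ φ)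
    (hx : 0 < r x) (hy : 0 < r y) (heq : polarCurve r φ x = polarCurve r φ y)
    (hpos : 0 < deriv r x * deriv φ y - deriv φ x * deriv r y) :
    0 < det2 (deriv (polarCurve r φ) x) (deriv (polarCurve r φ) y) := by
  have hradius : r x = r y := ((polarCurve_eq_iff hx hy).mp heq).1
  have hexp : Complex.exp (φ x * Complex.I) = Complex.exp (φ y * Complex.I) := by
    rw [polarCurve, polarCurve, hradius] at heq
    exact mul_left_cancel₀ (by exact_mod_cast hy.ne') heq
  rw [(hasDerivAt_polarCurve (hr x).hasDerivAt (hφ x).hasDerivAt).deriv,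
    (hasDerivAt_polarCurve (hr y).hasDerivAt (hφ y).hasDerivAt).deriv, hexp, det2_mul_right,
    hradius]
  have hdet : det2 (deriv r x + r y * deriv φ x * Complex.I)
      (deriv r y + r y * deriv φ y * Complex.I) =
      r y * (deriv r x * deriv φ y - deriv φ x * deriv r y) := by
    simp only [det2, Complex.add_re, Complex.add_im, Complex.mul_re, Complex.mul_im,
      Complex.ofReal_re, Complex.ofReal_im, Complex.I_re, Complex.I_im]
    ring
  rw [hdet]
  exact mul_pos (mul_pos hy hpos) (Complex.normSq_pos.mpr (Complex.exp_ne_zero _))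

end polarCurve

namespace PlanarCurve

lemma hasWhitney_of_mem_slitPlane (c : PlanarCurve) {α : ℝ → ℝ} (hα : Continuous α) {q : ℝ → ℂ}
    (hderiv : ∀ t, deriv c.toFun t = q t * Complex.exp (α t * Complex.I))
    (hq : ∀ t, q t ∈ Complex.slitPlane) {ω : ℤ} (hω : α 1 - α 0 = 2 * Real.pi * ω) :
    c.HasWhitney ω := by
  have hq_eq : q = fun t => deriv c.toFun t * Complex.exp (-(α t * Complex.I)) := by
    funext t
    rw [hderiv, mul_assoc, ← Complex.exp_add, add_neg_cancel, Complex.exp_zero, mul_one]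
  have hq_cont : Continuous q := by
    have := c.smooth.continuous_deriv (by simp)
    rw [hq_eq]
    fun_prop
  have hexp : Complex.exp (-(α 1 * Complex.I)) = Complex.exp (-(α 0 * Complex.I)) := by
    rw [Complex.exp_eq_exp_iff_exists_int, eq_add_of_sub_eq' hω]
    exact ⟨-ω, by push_cast; ring⟩
  have hq_closed : q 1 = q 0 := by
    have hperiod := c.periodic_deriv 0
    rw [zero_add] at hperiod
    simp only [hq_eq, hexp, hperiod]
  refine ⟨fun t => α t + (q t).arg, hα.add ?_, fun t => ?_, ?_⟩
  · exact continuous_iff_continuousAt.mpr fun t =>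
      (Complex.continuousAt_arg (hq t)).comp hq_cont.continuousAt
  · have hnorm : ‖deriv c.toFun t‖ = ‖q t‖ := by
      rw [hderiv, norm_mul, Complex.norm_exp_ofReal_mul_I, mul_one]
    rw [hnorm, Complex.ofReal_add, add_mul, add_comm, Complex.exp_add, ← mul_assoc,
      Complex.norm_mul_exp_arg_mul_I, ← hderiv]
  · simp only [hq_closed, add_sub_add_right_eq_sub, hω]

/-- The closed curve with radius `r` and polar angle `φ`, reparametrised to have period `1`. The
angle gains `2 * π * m` over one period. -/
def ofPolar (r φ : ℝ → ℝ) (m : ℤ) (hr : ContDiff ℝ (⊤ : ℕ∞) r) (hφ : ContDiff ℝ (⊤ : ℕ∞) φ)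
    (hr_periodic : Function.Periodic r (2 * Real.pi))
    (hφ_add : ∀ x, φ (x + 2 * Real.pi) = φ x + m * (2 * Real.pi))
    (himm : ∀ x, deriv (polarCurve r φ) x ≠ 0) : PlanarCurve where
  toFun t := polarCurve r φ (2 * Real.pi * t)
  periodic t := by
    simp only [mul_add, mul_one]
    exact polarCurve_eq_of_eq (hr_periodic _) (hφ_add _)
  smooth := (contDiff_polarCurve hr hφ).comp (contDiff_const.mul contDiff_id)
  immersion t := by
    rw [deriv_comp_mul_left]
    exact smul_ne_zero Real.two_pi_pos.ne' (himm _)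

end PlanarCurve

/-! ### The profile of a lobe -/

/-- The smooth profile `exp (1 - 1 / c)` for `0 < c`, extended by zero and normalised to take the
value `1` at `1`. -/
def bump (c : ℝ) : ℝ := Real.exp 1 * expNegInvGlue c

lemma contDiff_bump : ContDiff ℝ (⊤ : ℕ∞) bump :=
  contDiff_const.mul expNegInvGlue.contDiff

lemma monotone_bump : Monotone bump :=
  expNegInvGlue.monotone.const_mul (Real.exp_pos 1).le

lemma bump_one : bump 1 = 1 := by
  simp [bump, expNegInvGlue, ← Real.exp_add]

lemma bump_nonneg (c : ℝ) : 0 ≤ bump c :=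
  mul_nonneg (Real.exp_pos 1).le (expNegInvGlue.nonneg c)

lemma bump_eq_zero {c : ℝ} (hc : c ≤ 0) : bump c = 0 := by
  rw [bump, expNegInvGlue.zero_of_nonpos hc, mul_zero]

lemma bump_pos {c : ℝ} (hc : 0 < c) : 0 < bump c :=
  mul_pos (Real.exp_pos 1) (expNegInvGlue.pos_of_pos hc)

lemma bump_pos_iff {c : ℝ} : 0 < bump c ↔ 0 < c :=
  ⟨fun h => not_le.mp fun hc => h.ne' (bump_eq_zero hc), bump_pos⟩

lemma bump_cos_le_one (x : ℝ) : bump (Real.cos x) ≤ 1 :=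
  (monotone_bump (Real.cos_le_one x)).trans_eq bump_one

/-- At `c = 0` the inverse is `0`, which happens to give the right value. -/
lemma hasDerivAt_bump (c : ℝ) : HasDerivAt bump (c⁻¹ ^ 2 * bump c) c := by
  convert! (expNegInvGlue.hasDerivAt_polynomial_eval_inv_mul 1 c).const_mul (Real.exp 1) using 1
  · funext y
    simp only [bump, Polynomial.eval_one, one_mul]
  · simp only [bump, Polynomial.derivative_one, Polynomial.eval_mul, Polynomial.eval_pow,
      Polynomial.eval_X, Polynomial.eval_sub, Polynomial.eval_one, Polynomial.eval_zero]
    ring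

lemma deriv_bump_pos {c : ℝ} (hc : 0 < c) : 0 < deriv bump c := by
  rw [(hasDerivAt_bump c).deriv]
  exact mul_pos (by positivity) (bump_pos hc)

lemma deriv_bump_eq_zero {c : ℝ} (hc : c ≤ 0) : deriv bump c = 0 := by
  rw [(hasDerivAt_bump c).deriv, bump_eq_zero hc, mul_zero]

lemma deriv_bump_nonneg (c : ℝ) : 0 ≤ deriv bump c :=
  monotone_bump.deriv_nonneg

lemma strictMonoOn_bump : StrictMonoOn bump (Ici 0) := by
  refine strictMonoOn_of_deriv_pos (convex_Ici 0) contDiff_bump.continuous.continuousOn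
    fun c hc => ?_
  rw [interior_Ici] at hc
  exact deriv_bump_pos hc

lemma eq_of_bump_eq {c d : ℝ} (hc : 0 < c) (h : bump c = bump d) : c = d :=
  strictMonoOn_bump.injOn hc.le (bump_pos_iff.mp (h ▸ bump_pos hc)).le h

lemma strictAntiOn_sinc : StrictAntiOn Real.sinc (Ioc 0 Real.pi) := by
  intro x hx y hy hxy
  have hsecant := strictConcaveOn_sin_Icc.secant_strict_mono (a := 0)
    (left_mem_Icc.mpr Real.pi_pos.le) (Ioc_subset_Icc_self hx) (Ioc_subset_Icc_self hy)
    hx.1.ne' hy.1.ne' hxy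
  simpa [Real.sinc_of_ne_zero, hx.1.ne', hy.1.ne'] using hsecant

/-- The polar angle along a lobe of the curve, up to scaling and translation, as a function of the
distance `u` to the tip of the lobe. The radius there is a function of `Real.cos u`. -/
def lobeAngle (u : ℝ) : ℝ := u - 2 * Real.sin u * bump (Real.cos u)

lemma lobeAngle_eq_sinc {u : ℝ} (hu : u ≠ 0) :
    lobeAngle u = u * (1 - 2 * (Real.sinc u * bump (Real.cos u))) := by
  rw [lobeAngle, Real.sinc_of_ne_zero hu]
  field_simp

lemma lobeAngle_neg (u : ℝ) : lobeAngle (-u) = -lobeAngle u := by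
  simp only [lobeAngle, Real.sin_neg, Real.cos_neg]
  ring

lemma strictAntiOn_sinc_mul_bump_cos :
    StrictAntiOn (fun u => Real.sinc u * bump (Real.cos u)) (Ioo 0 (Real.pi / 2)) := by
  intro u hu v hv huv
  have hcos : ∀ {w}, w ∈ Ioo 0 (Real.pi / 2) → 0 < Real.cos w := fun hw =>
    Real.cos_pos_of_mem_Ioo ⟨by linarith [hw.1, hw.2], hw.2⟩
  have hmem : ∀ {w}, w ∈ Ioo 0 (Real.pi / 2) → w ∈ Ioc 0 Real.pi := fun hw =>
    ⟨hw.1, by linarith [hw.2, Real.pi_pos]⟩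
  have hcos_lt : Real.cos v < Real.cos u :=
    Real.cos_lt_cos_of_nonneg_of_le_pi hu.1.le (hmem hv).2 huv
  have hsinc_pos : 0 < Real.sinc v := by
    rw [Real.sinc_of_ne_zero hv.1.ne']
    exact div_pos (Real.sin_pos_of_pos_of_lt_pi hv.1 (by linarith [hv.2, Real.pi_pos])) hv.1
  have hsinc : Real.sinc v < Real.sinc u := strictAntiOn_sinc (hmem hu) (hmem hv) huv
  exact mul_lt_mul'' hsinc (strictMonoOn_bump (hcos hv).le (hcos hu).le hcos_lt) hsinc_pos.le
    (bump_nonneg _)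

lemma exists_lobeAngle_eq_zero : ∃ u ∈ Ioo 0 (Real.pi / 2), lobeAngle u = 0 := by
  have hcont : Continuous fun u => Real.sinc u * bump (Real.cos u) := by
    have := contDiff_bump.continuous
    have := Real.continuous_sinc
    fun_prop
  obtain ⟨u, hu, hvalue⟩ := intermediate_value_Ioo' Real.pi_div_two_pos.le hcont.continuousOn
    (show (1 / 2 : ℝ) ∈ Ioo _ _ by norm_num [bump_one, bump_eq_zero])
  refine ⟨u, hu, ?_⟩
  rw [lobeAngle_eq_sinc hu.1.ne', show Real.sinc u * bump (Real.cos u) = 1 / 2 from hvalue]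
  ring

/-- The positive zero of `lobeAngle`: the two sides of a lobe cross at distance `lobeZero` from its
tip. -/
def lobeZero : ℝ := exists_lobeAngle_eq_zero.choose

lemma lobeZero_mem : lobeZero ∈ Ioo 0 (Real.pi / 2) :=
  exists_lobeAngle_eq_zero.choose_spec.1

lemma lobeAngle_lobeZero : lobeAngle lobeZero = 0 :=
  exists_lobeAngle_eq_zero.choose_spec.2

lemma eq_lobeZero {u : ℝ} (hu : u ∈ Ioo 0 (Real.pi / 2)) (h : lobeAngle u = 0) :
    u = lobeZero := by
  have hvalue : ∀ {w}, w ∈ Ioo 0 (Real.pi / 2) → lobeAngle w = 0 →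
      Real.sinc w * bump (Real.cos w) = 1 / 2 := fun hw h => by
    rw [lobeAngle_eq_sinc hw.1.ne', mul_eq_zero] at h
    linarith [h.resolve_left hw.1.ne']
  exact strictAntiOn_sinc_mul_bump_cos.injOn hu lobeZero_mem
    ((hvalue hu h).trans (hvalue lobeZero_mem lobeAngle_lobeZero).symm)

lemma abs_lobeAngle_lt_pi {u : ℝ} (hu : |u| < Real.pi / 2) : |lobeAngle u| < Real.pi := by
  wlog hu0 : 0 ≤ u generalizing u
  · simpa only [lobeAngle_neg, abs_neg] using this (u := -u) (by rwa [abs_neg]) (by linarith)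
  rw [abs_of_nonneg hu0] at hu
  have hsin : 0 ≤ Real.sin u := Real.sin_nonneg_of_nonneg_of_le_pi hu0 (by linarith)
  have hprod : Real.sin u * bump (Real.cos u) ≤ 1 :=
    mul_le_one₀ (Real.sin_le_one u) (bump_nonneg _) (bump_cos_le_one u)
  have hprod0 := mul_nonneg hsin (bump_nonneg (Real.cos u))
  rw [lobeAngle, abs_lt]
  constructor <;> nlinarith [Real.pi_gt_three]

lemma hasDerivAt_lobeAngle (u : ℝ) :
    HasDerivAt lobeAngle (1 - 2 * (Real.cos u * bump (Real.cos u) -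
      Real.sin u ^ 2 * deriv bump (Real.cos u))) u := by
  have hbump := (hasDerivAt_bump (Real.cos u)).differentiableAt.hasDerivAt.comp u
    (Real.hasDerivAt_cos u)
  convert! (hasDerivAt_id u).sub (((Real.hasDerivAt_sin u).const_mul 2).mul hbump) using 1
  simp only [Function.comp_apply]
  ring

lemma deriv_lobeAngle_lobeZero_pos : 0 < deriv lobeAngle lobeZero := by
  obtain ⟨hpos, hlt⟩ := lobeZero_mem
  have hcos : 0 < Real.cos lobeZero := Real.cos_pos_of_mem_Ioo ⟨by linarith, hlt⟩
  have hsin : 0 < Real.sin lobeZero := Real.sin_pos_of_pos_of_lt_pi hpos (by linarith)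
  have hbump := bump_pos hcos
  have hzero : lobeZero = 2 * Real.sin lobeZero * bump (Real.cos lobeZero) :=
    sub_eq_zero.mp lobeAngle_lobeZero
  have htan : lobeZero * Real.cos lobeZero < Real.sin lobeZero := by
    rw [← lt_div_iff₀ hcos, ← Real.tan_eq_sin_div_cos]
    exact Real.lt_tan hpos hlt
  have hslope : 2 * Real.cos lobeZero * bump (Real.cos lobeZero) < 1 := by
    refine lt_of_mul_lt_mul_left (a := lobeZero) ?_ hpos.le
    calc lobeZero * (2 * Real.cos lobeZero * bump (Real.cos lobeZero))
        = lobeZero * Real.cos lobeZero * (2 * bump (Real.cos lobeZero)) := by ring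
      _ < Real.sin lobeZero * (2 * bump (Real.cos lobeZero)) := by gcongr
      _ = lobeZero * 1 := by linarith
  rw [(hasDerivAt_lobeAngle lobeZero).deriv]
  nlinarith [mul_pos (pow_pos hsin 2) (deriv_bump_pos hcos)]

/-! ### Radius and angle of the curve -/

lemma exists_int_abs_sub_lt_of_cos_lt_cos {h x : ℝ} (h0 : 0 ≤ h)
    (hx : Real.cos h < Real.cos x) : ∃ n : ℤ, |x - n * (2 * Real.pi)| < h := by
  set n := round (x / (2 * Real.pi))
  refine ⟨n, not_le.mp fun hle => hx.not_ge ?_⟩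
  have hmod : |x - n * (2 * Real.pi)| ≤ Real.pi := by
    have hround := abs_sub_round (x / (2 * Real.pi))
    rw [← mul_le_mul_iff_left₀ Real.two_pi_pos] at hround
    calc |x - n * (2 * Real.pi)| = |x / (2 * Real.pi) - n| * (2 * Real.pi) := by
          rw [← abs_of_pos Real.two_pi_pos, ← abs_mul, abs_of_pos Real.two_pi_pos, sub_mul,
            div_mul_cancel₀ _ Real.two_pi_pos.ne']
      _ ≤ Real.pi := hround.trans_eq (by ring)
  calc Real.cos x = Real.cos |x - n * (2 * Real.pi)| := by
        rw [Real.cos_abs, Real.cos_sub_int_mul_two_pi]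
    _ ≤ Real.cos h := Real.cos_le_cos_of_nonneg_of_le_pi h0 hmod hle

lemma int_eq_zero_of_abs_mul_lt {n : ℤ} {a : ℝ} (h : |n * a| < a) : n = 0 := by
  have ha : 0 < a := (abs_nonneg _).trans_lt h
  rw [abs_mul, abs_of_pos ha, mul_lt_iff_lt_one_left ha] at h
  exact Int.abs_lt_one_iff.mp (by exact_mod_cast h)

/-- Half the width of the arc of parameters around `0` along which the curve spirals. -/
def spiralHalfWidth (l : ℕ) : ℝ := Real.pi / (2 * l)

section spiralHalfWidth

variable {l : ℕ}

lemma spiralHalfWidth_pos (hl : 0 < l) : 0 < spiralHalfWidth l := by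
  unfold spiralHalfWidth
  positivity

lemma mul_spiralHalfWidth (hl : 0 < l) : l * spiralHalfWidth l = Real.pi / 2 := by
  unfold spiralHalfWidth
  field_simp

lemma spiralHalfWidth_le (hl : 0 < l) : spiralHalfWidth l ≤ Real.pi / 2 := by
  rw [← mul_spiralHalfWidth hl]
  exact le_mul_of_one_le_left (spiralHalfWidth_pos hl).le (by exact_mod_cast hl)

lemma cos_lt_cos_of_mem_Ico (hl : 0 < l) {x : ℝ} (hx : x ∈ Ico 0 (spiralHalfWidth l)) :
    Real.cos (spiralHalfWidth l) < Real.cos x :=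
  Real.cos_lt_cos_of_nonneg_of_le_pi hx.1
    ((spiralHalfWidth_le hl).trans (by linarith [Real.pi_pos])) hx.2

lemma cos_le_cos_of_mem_Icc (hl : 0 < l) {x : ℝ}
    (hx : x ∈ Icc (spiralHalfWidth l) (2 * Real.pi - spiralHalfWidth l)) :
    Real.cos x ≤ Real.cos (spiralHalfWidth l) := by
  have hh := spiralHalfWidth_pos hl
  rcases le_total x Real.pi with hxπ | hxπ
  · exact Real.cos_le_cos_of_nonneg_of_le_pi hh.le hxπ hx.1
  · rw [← Real.cos_two_pi_sub]
    exact Real.cos_le_cos_of_nonneg_of_le_pi hh.le (by linarith) (by linarith [hx.2])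

lemma mem_Icc_of_cos_le_cos (hl : 0 < l) {x : ℝ} (hx : x ∈ Ico 0 (2 * Real.pi))
    (hcos : Real.cos x ≤ Real.cos (spiralHalfWidth l)) :
    x ∈ Icc (spiralHalfWidth l) (2 * Real.pi - spiralHalfWidth l) := by
  constructor
  · by_contra! hlt
    exact hcos.not_gt (cos_lt_cos_of_mem_Ico hl ⟨hx.1, hlt⟩)
  · by_contra! hlt
    rw [← Real.cos_two_pi_sub] at hcos
    exact hcos.not_gt (cos_lt_cos_of_mem_Ico hl ⟨by linarith [hx.2], by linarith⟩)

lemma exists_int_abs_mul_sub_lt (hl : 0 < l) {x : ℝ}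
    (hx : Real.cos (spiralHalfWidth l) < Real.cos x) :
    ∃ n : ℤ, |x - n * (2 * Real.pi)| < Real.pi ∧
      |l * x - (l * n : ℤ) * (2 * Real.pi)| < Real.pi / 2 := by
  obtain ⟨n, hn⟩ := exists_int_abs_sub_lt_of_cos_lt_cos (spiralHalfWidth_pos hl).le hx
  refine ⟨n, hn.trans ((spiralHalfWidth_le hl).trans_lt (by linarith [Real.pi_pos])), ?_⟩
  have hl' : (0 : ℝ) < l := by exact_mod_cast hl
  calc |l * x - (l * n : ℤ) * (2 * Real.pi)| = l * |x - n * (2 * Real.pi)| := by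
        rw [← abs_of_pos hl', ← abs_mul, abs_of_pos hl']
        push_cast
        ring_nf
    _ < l * spiralHalfWidth l := by gcongr
    _ = Real.pi / 2 := mul_spiralHalfWidth hl

lemma cos_mul_pos_of_cos_lt_cos (hl : 0 < l) {x : ℝ}
    (hx : Real.cos (spiralHalfWidth l) < Real.cos x) : 0 < Real.cos (l * x) := by
  obtain ⟨n, -, hn⟩ := exists_int_abs_mul_sub_lt hl hx
  rw [← Real.cos_sub_int_mul_two_pi _ (l * n)]
  exact Real.cos_pos_of_mem_Ioo (abs_lt.mp hn)

lemma sin_mul_sin_nonneg_of_cos_lt_cos (hl : 0 < l) {x : ℝ}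
    (hx : Real.cos (spiralHalfWidth l) < Real.cos x) : 0 ≤ Real.sin (l * x) * Real.sin x := by
  obtain ⟨n, hn, hln⟩ := exists_int_abs_mul_sub_lt hl hx
  rw [← Real.sin_sub_int_mul_two_pi _ (l * n), ← Real.sin_sub_int_mul_two_pi x n]
  have hmul : l * x - (l * n : ℤ) * (2 * Real.pi) = l * (x - n * (2 * Real.pi)) := by
    push_cast
    ring
  rw [hmul] at hln ⊢
  generalize x - n * (2 * Real.pi) = y at hn hln
  rw [abs_lt] at hn hln
  have hl' : (0 : ℝ) ≤ l := l.cast_nonneg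
  rcases le_total 0 y with hy | hy
  · exact mul_nonneg (Real.sin_nonneg_of_nonneg_of_le_pi (by positivity) (by linarith))
      (Real.sin_nonneg_of_nonneg_of_le_pi hy hn.2.le)
  · exact mul_nonneg_of_nonpos_of_nonpos
      (Real.sin_nonpos_of_nonpos_of_neg_pi_le (mul_nonpos_of_nonneg_of_nonpos hl' hy)
        (by linarith))
      (Real.sin_nonpos_of_nonpos_of_neg_pi_le hy hn.1.le)

end spiralHalfWidth

/-- The depth by which the curve dips into the circle of radius `2` while it spirals. -/
def spiralBump (l : ℕ) (x : ℝ) : ℝ := bump (Real.cos x - Real.cos (spiralHalfWidth l))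

/-- The height of the lobes, centred at the odd multiples of `π / l`, over the circle of
radius `2`. -/
def lobeBump (l : ℕ) (x : ℝ) : ℝ := bump (-Real.cos (l * x))

/-- The primitive of `spiralBump`, normalised to increase by `1` over a period. -/
def spiralTurn (l : ℕ) (x : ℝ) : ℝ :=
  (∫ y in 0..x, spiralBump l y) / ∫ y in 0..2 * Real.pi, spiralBump l y

/-- The radius of the curve `c_{ω,n}` as a function of a parameter of period `2 * π`. -/
def curveRadius (l : ℕ) (x : ℝ) : ℝ := 2 + lobeBump l x - spiralBump l x

/-- The polar angle of the curve `c_{ω,n}`. The second summand makes the `l` lobes turn backwards at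
their tips, hence cross themselves; the third adds `k` full turns to the spiral. -/
def curveAngle (k l : ℕ) (x : ℝ) : ℝ :=
  x + 2 / l * (Real.sin (l * x) * lobeBump l x) + 2 * Real.pi * k * spiralTurn l x

section curve

variable {k l : ℕ}

lemma contDiff_spiralBump : ContDiff ℝ (⊤ : ℕ∞) (spiralBump l) :=
  contDiff_bump.comp (Real.contDiff_cos.sub contDiff_const)

lemma contDiff_lobeBump : ContDiff ℝ (⊤ : ℕ∞) (lobeBump l) :=
  contDiff_bump.comp (Real.contDiff_cos.comp (contDiff_const.mul contDiff_id)).neg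

lemma spiralBump_neg (x : ℝ) : spiralBump l (-x) = spiralBump l x := by
  rw [spiralBump, Real.cos_neg, spiralBump]

lemma lobeBump_neg (x : ℝ) : lobeBump l (-x) = lobeBump l x := by
  rw [lobeBump, mul_neg, Real.cos_neg, lobeBump]

lemma spiralBump_periodic : Function.Periodic (spiralBump l) (2 * Real.pi) := fun x => by
  rw [spiralBump, Real.cos_add_two_pi, spiralBump]

lemma lobeBump_periodic : Function.Periodic (lobeBump l) (2 * Real.pi) := fun x => by
  rw [lobeBump, mul_add, Real.cos_add_nat_mul_two_pi, lobeBump]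

lemma spiralBump_pos_iff {x : ℝ} :
    0 < spiralBump l x ↔ Real.cos (spiralHalfWidth l) < Real.cos x := by
  rw [spiralBump, bump_pos_iff, sub_pos]

lemma lobeBump_pos_iff {x : ℝ} : 0 < lobeBump l x ↔ Real.cos (l * x) < 0 := by
  rw [lobeBump, bump_pos_iff, neg_pos]

lemma spiralBump_eq_zero {x : ℝ} (hx : Real.cos x ≤ Real.cos (spiralHalfWidth l)) :
    spiralBump l x = 0 :=
  bump_eq_zero (sub_nonpos.mpr hx)

lemma lobeBump_eq_zero {x : ℝ} (hx : 0 ≤ Real.cos (l * x)) : lobeBump l x = 0 :=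
  bump_eq_zero (neg_nonpos.mpr hx)

lemma cos_le_cos_of_cos_mul_nonpos (hl : 0 < l) {x : ℝ} (hx : Real.cos (l * x) ≤ 0) :
    Real.cos x ≤ Real.cos (spiralHalfWidth l) :=
  not_lt.mp fun h => hx.not_gt (cos_mul_pos_of_cos_lt_cos hl h)

lemma spiralBump_le_one (hl : 0 < l) (x : ℝ) : spiralBump l x ≤ 1 := by
  have hcos : 0 ≤ Real.cos (spiralHalfWidth l) := Real.cos_nonneg_of_neg_pi_div_two_le_of_le
    (by linarith [spiralHalfWidth_pos hl, Real.pi_pos]) (spiralHalfWidth_le hl)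
  exact (monotone_bump (by linarith [Real.cos_le_one x])).trans_eq bump_one

lemma integral_spiralBump_pos (hl : 0 < l) : 0 < ∫ y in 0..2 * Real.pi, spiralBump l y := by
  refine intervalIntegral.integral_pos Real.two_pi_pos contDiff_spiralBump.continuous.continuousOn
    (fun x _ => bump_nonneg _) ⟨0, left_mem_Icc.mpr Real.two_pi_pos.le, ?_⟩
  exact spiralBump_pos_iff.mpr (cos_lt_cos_of_mem_Ico hl ⟨le_rfl, spiralHalfWidth_pos hl⟩)

lemma hasDerivAt_spiralTurn (x : ℝ) : HasDerivAt (spiralTurn l)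
    (spiralBump l x / ∫ y in 0..2 * Real.pi, spiralBump l y) x :=
  (contDiff_spiralBump.continuous.integral_hasStrictDerivAt 0 x).hasDerivAt.div_const _

lemma contDiff_spiralTurn : ContDiff ℝ (⊤ : ℕ∞) (spiralTurn l) := by
  rw [contDiff_infty_iff_deriv, deriv_eq hasDerivAt_spiralTurn]
  exact ⟨fun x => (hasDerivAt_spiralTurn x).differentiableAt, contDiff_spiralBump.div_const _⟩

lemma spiralTurn_neg (x : ℝ) : spiralTurn l (-x) = -spiralTurn l x := by
  have hint : ∫ y in 0..-x, spiralBump l y = -∫ y in 0..x, spiralBump l y := by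
    have hneg := intervalIntegral.integral_comp_neg (a := 0) (b := x) (spiralBump l)
    simp only [spiralBump_neg, neg_zero] at hneg
    rw [hneg, intervalIntegral.integral_symm]
  rw [spiralTurn, hint, neg_div, spiralTurn]

lemma spiralTurn_add_two_pi (hl : 0 < l) (x : ℝ) :
    spiralTurn l (x + 2 * Real.pi) = spiralTurn l x + 1 := by
  have hcont : Continuous (spiralBump l) := contDiff_spiralBump.continuous
  rw [spiralTurn, ← intervalIntegral.integral_add_adjacent_intervals
      (hcont.intervalIntegrable 0 x) (hcont.intervalIntegrable x _),
    spiralBump_periodic.intervalIntegral_add_eq x 0, zero_add, add_div,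
    div_self (integral_spiralBump_pos hl).ne', spiralTurn]

lemma spiralTurn_eq_half (hl : 0 < l) {x : ℝ}
    (hx : x ∈ Icc (spiralHalfWidth l) (2 * Real.pi - spiralHalfWidth l)) :
    spiralTurn l x = 1 / 2 := by
  have hcont : Continuous (spiralBump l) := contDiff_spiralBump.continuous
  have hπ : Real.pi ∈ Icc (spiralHalfWidth l) (2 * Real.pi - spiralHalfWidth l) := by
    constructor <;> linarith [spiralHalfWidth_le hl, Real.pi_pos]
  have hzero : ∫ y in Real.pi..x, spiralBump l y = 0 :=
    intervalIntegral.integral_zero_ae <| .of_forall fun y hy => spiralBump_eq_zero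
      (cos_le_cos_of_mem_Icc hl (uIcc_subset_Icc hπ hx (uIoc_subset_uIcc hy)))
  have hconst : spiralTurn l x = spiralTurn l Real.pi := by
    rw [spiralTurn, ← intervalIntegral.integral_add_adjacent_intervals
      (hcont.intervalIntegrable 0 Real.pi) (hcont.intervalIntegrable Real.pi x), hzero, add_zero,
      spiralTurn]
  have hsymm := spiralTurn_add_two_pi hl (-Real.pi)
  rw [spiralTurn_neg, neg_add_eq_sub, two_mul, add_sub_cancel_right] at hsymm
  linarith

lemma contDiff_curveRadius : ContDiff ℝ (⊤ : ℕ∞) (curveRadius l) :=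
  (contDiff_const.add contDiff_lobeBump).sub contDiff_spiralBump

lemma contDiff_curveAngle : ContDiff ℝ (⊤ : ℕ∞) (curveAngle k l) :=
  (contDiff_id.add (contDiff_const.mul
    ((Real.contDiff_sin.comp (contDiff_const.mul contDiff_id)).mul contDiff_lobeBump))).add
    (contDiff_const.mul contDiff_spiralTurn)

lemma curveRadius_pos (hl : 0 < l) (x : ℝ) : 0 < curveRadius l x := by
  have hlobe : 0 ≤ lobeBump l x := bump_nonneg _
  rw [curveRadius]
  linarith [spiralBump_le_one hl x]

lemma curveRadius_periodic : Function.Periodic (curveRadius l) (2 * Real.pi) := fun x => by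
  rw [curveRadius, lobeBump_periodic, spiralBump_periodic, curveRadius]

lemma curveAngle_add_two_pi (hl : 0 < l) (x : ℝ) :
    curveAngle k l (x + 2 * Real.pi) = curveAngle k l x + (k + 1 : ℤ) * (2 * Real.pi) := by
  rw [curveAngle, spiralTurn_add_two_pi hl, lobeBump_periodic, mul_add (l : ℝ),
    Real.sin_add_nat_mul_two_pi, curveAngle]
  push_cast
  ring

lemma curveRadius_two_pi_sub (x : ℝ) : curveRadius l (2 * Real.pi - x) = curveRadius l x := by
  rw [← neg_add_eq_sub, curveRadius_periodic, curveRadius, lobeBump_neg, spiralBump_neg,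
    curveRadius]

lemma curveAngle_two_pi_sub (hl : 0 < l) (x : ℝ) :
    curveAngle k l (2 * Real.pi - x) = (k + 1 : ℤ) * (2 * Real.pi) - curveAngle k l x := by
  rw [← neg_add_eq_sub, curveAngle_add_two_pi hl, curveAngle, mul_neg, Real.sin_neg, lobeBump_neg,
    spiralTurn_neg, curveAngle]
  ring

lemma curveRadius_lt_two_iff (hl : 0 < l) {x : ℝ} :
    curveRadius l x < 2 ↔ Real.cos (spiralHalfWidth l) < Real.cos x := by
  rw [← spiralBump_pos_iff]
  refine ⟨fun h => ?_, fun h => ?_⟩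
  · have hlobe : 0 ≤ lobeBump l x := bump_nonneg _
    rw [curveRadius] at h
    linarith
  · rw [curveRadius, lobeBump_eq_zero (cos_mul_pos_of_cos_lt_cos hl (spiralBump_pos_iff.mp h)).le]
    linarith

lemma two_lt_curveRadius_iff (hl : 0 < l) {x : ℝ} :
    2 < curveRadius l x ↔ Real.cos (l * x) < 0 := by
  rw [← lobeBump_pos_iff]
  refine ⟨fun h => ?_, fun h => ?_⟩
  · have hspiral : 0 ≤ spiralBump l x := bump_nonneg _
    rw [curveRadius] at h
    linarith
  · rw [curveRadius, spiralBump_eq_zero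
      (cos_le_cos_of_cos_mul_nonpos hl (lobeBump_pos_iff.mp h).le)]
    linarith

end curve

/-! ### Velocity and winding number -/

section curveDeriv

variable {k l : ℕ}

lemma hasDerivAt_lobeBump (x : ℝ) :
    HasDerivAt (lobeBump l) (l * Real.sin (l * x) * deriv bump (-Real.cos (l * x))) x := by
  convert! (hasDerivAt_bump _).differentiableAt.hasDerivAt.comp x
    (hasDerivAt_const_mul (l : ℝ)).cos.neg using 1
  simp only [Pi.neg_apply]
  ring

lemma hasDerivAt_spiralBump (x : ℝ) : HasDerivAt (spiralBump l)
    (-(Real.sin x * deriv bump (Real.cos x - Real.cos (spiralHalfWidth l)))) x := by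
  convert! (hasDerivAt_bump _).differentiableAt.hasDerivAt.comp x
    ((Real.hasDerivAt_cos x).sub_const _) using 1
  ring

lemma hasDerivAt_curveRadius (x : ℝ) : HasDerivAt (curveRadius l)
    (l * Real.sin (l * x) * deriv bump (-Real.cos (l * x)) +
      Real.sin x * deriv bump (Real.cos x - Real.cos (spiralHalfWidth l))) x := by
  convert! ((hasDerivAt_lobeBump x).const_add 2).sub (hasDerivAt_spiralBump x) using 1
  ring

lemma hasDerivAt_curveAngle (hl : 0 < l) (x : ℝ) : HasDerivAt (curveAngle k l)
    (1 + 2 * (Real.cos (l * x) * lobeBump l x +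
        Real.sin (l * x) ^ 2 * deriv bump (-Real.cos (l * x))) +
      2 * Real.pi * k * (spiralBump l x / ∫ y in 0..2 * Real.pi, spiralBump l y)) x := by
  convert! ((hasDerivAt_id x).add (((hasDerivAt_const_mul (l : ℝ)).sin.mul
    (hasDerivAt_lobeBump x)).const_mul (2 / l : ℝ))).add
    ((hasDerivAt_spiralTurn x).const_mul (2 * Real.pi * k)) using 1
  field_simp

lemma deriv_curveRadius_of_cos_mul_nonneg {x : ℝ} (hx : 0 ≤ Real.cos (l * x)) :
    deriv (curveRadius l) x =
      Real.sin x * deriv bump (Real.cos x - Real.cos (spiralHalfWidth l)) := by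
  rw [(hasDerivAt_curveRadius x).deriv, deriv_bump_eq_zero (neg_nonpos.mpr hx), mul_zero, zero_add]

lemma deriv_curveRadius_of_cos_mul_nonpos (hl : 0 < l) {x : ℝ} (hx : Real.cos (l * x) ≤ 0) :
    deriv (curveRadius l) x = l * Real.sin (l * x) * deriv bump (-Real.cos (l * x)) := by
  rw [(hasDerivAt_curveRadius x).deriv,
    deriv_bump_eq_zero (sub_nonpos.mpr (cos_le_cos_of_cos_mul_nonpos hl hx)), mul_zero, add_zero]

lemma one_le_deriv_curveAngle (hl : 0 < l) {x : ℝ} (hx : 0 ≤ Real.cos (l * x)) :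
    1 ≤ deriv (curveAngle k l) x := by
  have hspiral : 0 ≤ spiralBump l x := bump_nonneg _
  have hint := integral_spiralBump_pos hl
  rw [(hasDerivAt_curveAngle hl x).deriv, lobeBump_eq_zero hx,
    deriv_bump_eq_zero (neg_nonpos.mpr hx), mul_zero, mul_zero, add_zero, mul_zero, add_zero]
  exact le_add_of_nonneg_right (by positivity)

lemma deriv_curveAngle_of_cos_mul_nonpos (hl : 0 < l) {x : ℝ} (hx : Real.cos (l * x) ≤ 0) :
    deriv (curveAngle k l) x = 1 + 2 * (Real.cos (l * x) * lobeBump l x +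
      Real.sin (l * x) ^ 2 * deriv bump (-Real.cos (l * x))) := by
  rw [(hasDerivAt_curveAngle hl x).deriv, spiralBump_eq_zero (cos_le_cos_of_cos_mul_nonpos hl hx),
    zero_div, mul_zero, add_zero]

lemma differentiable_curveRadius : Differentiable ℝ (curveRadius l) :=
  fun x => (hasDerivAt_curveRadius x).differentiableAt

lemma differentiable_curveAngle : Differentiable ℝ (curveAngle k l) :=
  contDiff_curveAngle.differentiable (by simp)

/-- The velocity of the curve `c_{ω,n}` in the frame that turns by the angle
`curveAngle k l x + π / 2 - l * x`. -/
def framedVelocity (k l : ℕ) (x : ℝ) : ℂ :=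
  (deriv (curveRadius l) x + curveRadius l x * deriv (curveAngle k l) x * Complex.I) *
    Complex.exp ((l * x - Real.pi / 2 : ℝ) * Complex.I)

lemma deriv_polarCurve_curve (x : ℝ) :
    deriv (polarCurve (curveRadius l) (curveAngle k l)) x = framedVelocity k l x *
      Complex.exp ((curveAngle k l x + Real.pi / 2 - l * x : ℝ) * Complex.I) := by
  rw [(hasDerivAt_polarCurve (differentiable_curveRadius x).hasDerivAt
    (differentiable_curveAngle x).hasDerivAt).deriv, framedVelocity, mul_assoc _ _ (Complex.exp _),
    ← Complex.exp_add]
  push_cast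
  ring_nf

lemma framedVelocity_re (x : ℝ) : (framedVelocity k l x).re =
    Real.sin (l * x) * deriv (curveRadius l) x +
      Real.cos (l * x) * (curveRadius l x * deriv (curveAngle k l) x) := by
  simp only [framedVelocity, Complex.mul_re, Complex.add_re, Complex.add_im, Complex.mul_im,
    Complex.exp_ofReal_mul_I_re, Complex.exp_ofReal_mul_I_im, Complex.ofReal_re,
    Complex.ofReal_im, Complex.I_re, Complex.I_im, Real.cos_sub_pi_div_two, Real.sin_sub_pi_div_two]
  ring

lemma framedVelocity_im (x : ℝ) : (framedVelocity k l x).im =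
    Real.sin (l * x) * (curveRadius l x * deriv (curveAngle k l) x) -
      Real.cos (l * x) * deriv (curveRadius l) x := by
  simp only [framedVelocity, Complex.mul_re, Complex.add_re, Complex.add_im, Complex.mul_im,
    Complex.exp_ofReal_mul_I_re, Complex.exp_ofReal_mul_I_im, Complex.ofReal_re,
    Complex.ofReal_im, Complex.I_re, Complex.I_im, Real.cos_sub_pi_div_two, Real.sin_sub_pi_div_two]
  ring

lemma framedVelocity_mem_slitPlane_of_cos_mul_neg (hl : 0 < l) {x : ℝ}
    (hx : Real.cos (l * x) < 0) : framedVelocity k l x ∈ Complex.slitPlane := by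
  have hr := curveRadius_pos hl x
  have hderiv : 0 < deriv bump (-Real.cos (l * x)) := deriv_bump_pos (neg_pos.mpr hx)
  rw [Complex.mem_slitPlane_iff_not_le_zero, Complex.le_def, framedVelocity_re, framedVelocity_im,
    deriv_curveRadius_of_cos_mul_nonpos hl hx.le]
  rintro ⟨hre, him⟩
  rw [Complex.zero_re] at hre
  rw [Complex.zero_im, sub_eq_zero] at him
  by_cases hsin : Real.sin (l * x) = 0
  · have hcos : Real.cos (l * x) = -1 :=
      (Real.sin_eq_zero_iff_cos_eq.mp hsin).resolve_left (by linarith)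
    rw [deriv_curveAngle_of_cos_mul_nonpos hl hx.le, lobeBump, hcos, hsin, neg_neg, bump_one] at hre
    linarith
  · have hangular : curveRadius l x * deriv (curveAngle k l) x =
        Real.cos (l * x) * (l * deriv bump (-Real.cos (l * x))) :=
      mul_left_cancel₀ hsin (him.trans (by ring))
    have hre_eq : Real.sin (l * x) * (l * Real.sin (l * x) * deriv bump (-Real.cos (l * x))) +
        Real.cos (l * x) * (Real.cos (l * x) * (l * deriv bump (-Real.cos (l * x)))) =
        l * deriv bump (-Real.cos (l * x)) := by
      linear_combination l * deriv bump (-Real.cos (l * x)) * Real.sin_sq_add_cos_sq (l * x)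
    rw [hangular, hre_eq] at hre
    exact hre.not_gt (by positivity)

lemma framedVelocity_mem_slitPlane_of_cos_mul_nonneg (hl : 0 < l) {x : ℝ}
    (hx : 0 ≤ Real.cos (l * x)) : framedVelocity k l x ∈ Complex.slitPlane := by
  have hangular : 0 < curveRadius l x * deriv (curveAngle k l) x :=
    mul_pos (curveRadius_pos hl x) (one_pos.trans_le (one_le_deriv_curveAngle hl hx))
  rw [Complex.mem_slitPlane_iff, framedVelocity_re, framedVelocity_im,
    deriv_curveRadius_of_cos_mul_nonneg hx]
  rcases hx.eq_or_lt with hcos | hcos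
  · right
    have hsin : Real.sin (l * x) ≠ 0 := fun hsin => by
      simpa [hsin, ← hcos] using Real.sin_sq_add_cos_sq (l * x)
    rw [← hcos, zero_mul, sub_zero]
    exact mul_ne_zero hsin hangular.ne'
  · left
    have hradial : 0 ≤ Real.sin (l * x) *
        (Real.sin x * deriv bump (Real.cos x - Real.cos (spiralHalfWidth l))) := by
      rcases le_or_gt (Real.cos x) (Real.cos (spiralHalfWidth l)) with hle | hlt
      · rw [deriv_bump_eq_zero (sub_nonpos.mpr hle), mul_zero, mul_zero]
      · rw [← mul_assoc]
        exact mul_nonneg (sin_mul_sin_nonneg_of_cos_lt_cos hl hlt) (deriv_bump_nonneg _)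
    exact add_pos_of_nonneg_of_pos hradial (mul_pos hcos hangular)

lemma framedVelocity_mem_slitPlane (hl : 0 < l) (x : ℝ) :
    framedVelocity k l x ∈ Complex.slitPlane :=
  (lt_or_ge (Real.cos (l * x)) 0).elim (framedVelocity_mem_slitPlane_of_cos_mul_neg hl)
    (framedVelocity_mem_slitPlane_of_cos_mul_nonneg hl)

/-- The curve `c_{ω,n}` with `k` crossings in the spiral and `l` lobes. -/
def spiralLobeCurve (k l : ℕ) (hl : 0 < l) : PlanarCurve :=
  .ofPolar (curveRadius l) (curveAngle k l) (k + 1) contDiff_curveRadius contDiff_curveAngle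
    curveRadius_periodic (curveAngle_add_two_pi hl) fun x => by
      rw [deriv_polarCurve_curve]
      exact mul_ne_zero (Complex.slitPlane_ne_zero (framedVelocity_mem_slitPlane hl x))
        (Complex.exp_ne_zero _)

lemma deriv_spiralLobeCurve (hl : 0 < l) (t : ℝ) : deriv (spiralLobeCurve k l hl).toFun t =
    (2 * Real.pi) • deriv (polarCurve (curveRadius l) (curveAngle k l)) (2 * Real.pi * t) :=
  deriv_comp_mul_left (2 * Real.pi) (polarCurve (curveRadius l) (curveAngle k l)) t

lemma hasWhitney_spiralLobeCurve (hl : 0 < l) :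
    (spiralLobeCurve k l hl).HasWhitney (k + 1 - l) := by
  refine PlanarCurve.hasWhitney_of_mem_slitPlane _
    (α := fun t => curveAngle k l (2 * Real.pi * t) + Real.pi / 2 - l * (2 * Real.pi * t))
    (q := fun t => (2 * Real.pi) • framedVelocity k l (2 * Real.pi * t)) ?_ (fun t => ?_)
    (fun t => ?_) ?_
  · have := (contDiff_curveAngle (k := k) (l := l)).continuous
    fun_prop
  · rw [deriv_spiralLobeCurve, deriv_polarCurve_curve, smul_mul_assoc]
  · rw [Complex.real_smul, mul_comm, Complex.mem_slitPlane_iff, Complex.re_mul_ofReal,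
      Complex.im_mul_ofReal, mul_pos_iff_of_pos_right Real.two_pi_pos]
    exact (Complex.mem_slitPlane_iff.mp (framedVelocity_mem_slitPlane hl _)).imp_right
      fun him => mul_ne_zero him Real.two_pi_pos.ne'
  · have hturn := curveAngle_add_two_pi (k := k) hl 0
    rw [zero_add] at hturn
    simp only [mul_one, mul_zero, hturn]
    push_cast
    ring

end curveDeriv

/-! ### Crossings -/

/-- The parameter at signed distance `u / l` from the tip of the `j`-th lobe. -/
def lobePoint (l : ℕ) (j : Fin l) (u : ℝ) : ℝ := ((2 * j + 1) * Real.pi + u) / l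

section lobePoint

variable {k l : ℕ}

lemma mul_lobePoint (j : Fin l) (u : ℝ) :
    l * lobePoint l j u = u + Real.pi + (j : ℕ) * (2 * Real.pi) := by
  have hl : (l : ℝ) ≠ 0 := by exact_mod_cast j.pos.ne'
  rw [lobePoint, mul_div_cancel₀ _ hl]
  ring

lemma cos_mul_lobePoint (j : Fin l) (u : ℝ) : Real.cos (l * lobePoint l j u) = -Real.cos u := by
  rw [mul_lobePoint, Real.cos_add_nat_mul_two_pi, Real.cos_add_pi]

lemma sin_mul_lobePoint (j : Fin l) (u : ℝ) : Real.sin (l * lobePoint l j u) = -Real.sin u := by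
  rw [mul_lobePoint, Real.sin_add_nat_mul_two_pi, Real.sin_add_pi]

lemma lobePoint_strictMono (j : Fin l) : StrictMono (lobePoint l j) := fun u v huv => by
  have hl : (0 : ℝ) < l := by exact_mod_cast j.pos
  unfold lobePoint
  gcongr

lemma exists_lobePoint_eq {x : ℝ} (hx : x ∈ Ico 0 (2 * Real.pi)) (hcos : Real.cos (l * x) < 0) :
    ∃ j u, |u| < Real.pi / 2 ∧ lobePoint l j u = x := by
  have hl : 0 < l := Nat.pos_of_ne_zero fun h => by norm_num [h] at hcos
  have hl' : (0 : ℝ) < l := by exact_mod_cast hl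
  have hquot : 0 ≤ l * x / (2 * Real.pi) :=
    div_nonneg (mul_nonneg hl'.le hx.1) Real.two_pi_pos.le
  have hlt : ⌊l * x / (2 * Real.pi)⌋₊ < l := by
    rw [Nat.floor_lt hquot, div_lt_iff₀ Real.two_pi_pos]
    exact mul_lt_mul_of_pos_left hx.2 hl'
  obtain ⟨j, hj⟩ : ∃ j : Fin l, (j : ℕ) = ⌊l * x / (2 * Real.pi)⌋₊ := ⟨⟨_, hlt⟩, rfl⟩
  have hfloor_le := Nat.floor_le hquot
  have hlt_floor := Nat.lt_floor_add_one (l * x / (2 * Real.pi))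
  rw [← hj, le_div_iff₀ Real.two_pi_pos] at hfloor_le
  rw [← hj, div_lt_iff₀ Real.two_pi_pos] at hlt_floor
  have hpoint : lobePoint l j (l * x - (2 * j + 1) * Real.pi) = x := by
    rw [lobePoint, add_sub_cancel, mul_div_cancel_left₀ _ hl'.ne']
  have hcos_pos := cos_mul_lobePoint j (l * x - (2 * j + 1) * Real.pi)
  rw [hpoint, ← Real.cos_abs (l * x - _)] at hcos_pos
  refine ⟨j, _, not_le.mp fun hle => ?_, hpoint⟩
  have habs : |l * x - (2 * j + 1) * Real.pi| ≤ Real.pi + Real.pi / 2 :=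
    abs_le.mpr ⟨by linarith [Real.pi_pos], by linarith [Real.pi_pos]⟩
  linarith [Real.cos_nonpos_of_pi_div_two_le_of_le hle habs]

lemma lobePoint_mem_Icc (j : Fin l) {u : ℝ} (hu : |u| ≤ Real.pi / 2) :
    lobePoint l j u ∈ Icc (spiralHalfWidth l) (2 * Real.pi - spiralHalfWidth l) := by
  have hl : (0 : ℝ) < l := by exact_mod_cast j.pos
  have hj : (j : ℝ) + 1 ≤ l := by exact_mod_cast j.isLt
  have hjπ := mul_le_mul_of_nonneg_right hj Real.pi_pos.le
  have hwidth := mul_spiralHalfWidth j.pos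
  have hmul := mul_lobePoint j u
  rw [abs_le] at hu
  constructor <;> refine le_of_mul_le_mul_left ?_ hl
  · linarith [mul_nonneg (j : ℕ).cast_nonneg Real.two_pi_pos.le]
  · linarith

lemma curveRadius_lobePoint (j : Fin l) {u : ℝ} (hu : |u| ≤ Real.pi / 2) :
    curveRadius l (lobePoint l j u) = 2 + bump (Real.cos u) := by
  rw [curveRadius, spiralBump_eq_zero (cos_le_cos_of_mem_Icc j.pos (lobePoint_mem_Icc j hu)),
    lobeBump, cos_mul_lobePoint, neg_neg, sub_zero]

lemma curveAngle_lobePoint (j : Fin l) {u : ℝ} (hu : |u| ≤ Real.pi / 2) :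
    curveAngle k l (lobePoint l j u) =
      ((2 * j + 1) * Real.pi + lobeAngle u) / l + Real.pi * k := by
  rw [curveAngle, spiralTurn_eq_half j.pos (lobePoint_mem_Icc j hu), sin_mul_lobePoint, lobeBump,
    cos_mul_lobePoint, neg_neg, lobePoint, lobeAngle]
  ring

lemma deriv_curveRadius_lobePoint (j : Fin l) {u : ℝ} (hu : |u| ≤ Real.pi / 2) :
    deriv (curveRadius l) (lobePoint l j u) = -(l * Real.sin u * deriv bump (Real.cos u)) := by
  have hcos : 0 ≤ Real.cos u := Real.cos_nonneg_of_mem_Icc (abs_le.mp hu)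
  rw [deriv_curveRadius_of_cos_mul_nonpos j.pos (by rw [cos_mul_lobePoint]; linarith),
    cos_mul_lobePoint, sin_mul_lobePoint, neg_neg]
  ring

lemma deriv_curveAngle_lobePoint (j : Fin l) {u : ℝ} (hu : |u| ≤ Real.pi / 2) :
    deriv (curveAngle k l) (lobePoint l j u) = deriv lobeAngle u := by
  have hcos : 0 ≤ Real.cos u := Real.cos_nonneg_of_mem_Icc (abs_le.mp hu)
  rw [deriv_curveAngle_of_cos_mul_nonpos j.pos (by rw [cos_mul_lobePoint]; linarith), lobeBump,
    cos_mul_lobePoint, sin_mul_lobePoint, neg_neg, (hasDerivAt_lobeAngle u).deriv]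
  ring

lemma abs_lobeZero_lt : |lobeZero| < Real.pi / 2 :=
  (abs_of_pos lobeZero_mem.1).trans_lt lobeZero_mem.2

lemma polarCurve_lobePoint_neg_lobeZero (j : Fin l) :
    polarCurve (curveRadius l) (curveAngle k l) (lobePoint l j (-lobeZero)) =
      polarCurve (curveRadius l) (curveAngle k l) (lobePoint l j lobeZero) := by
  have hneg : |-lobeZero| ≤ Real.pi / 2 := (abs_neg lobeZero).trans_le abs_lobeZero_lt.le
  refine polarCurve_eq_of_eq (n := 0) ?_ ?_
  · rw [curveRadius_lobePoint j hneg, curveRadius_lobePoint j abs_lobeZero_lt.le, Real.cos_neg]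
  · rw [curveAngle_lobePoint j hneg, curveAngle_lobePoint j abs_lobeZero_lt.le, lobeAngle_neg,
      lobeAngle_lobeZero, neg_zero, Int.cast_zero, zero_mul, add_zero (_ + _)]

lemma det2_deriv_lobePoint_pos (j : Fin l) :
    0 < det2 (deriv (polarCurve (curveRadius l) (curveAngle k l)) (lobePoint l j (-lobeZero)))
      (deriv (polarCurve (curveRadius l) (curveAngle k l)) (lobePoint l j lobeZero)) := by
  have hneg : |-lobeZero| ≤ Real.pi / 2 := (abs_neg lobeZero).trans_le abs_lobeZero_lt.le
  have hsin : 0 < Real.sin lobeZero :=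
    Real.sin_pos_of_pos_of_lt_pi lobeZero_mem.1 (by linarith [lobeZero_mem.2, Real.pi_pos])
  have hcos : 0 < Real.cos lobeZero := Real.cos_pos_of_mem_Ioo (abs_lt.mp abs_lobeZero_lt)
  have hbump := deriv_bump_pos hcos
  have hangle := deriv_lobeAngle_lobeZero_pos
  have heven : deriv lobeAngle (-lobeZero) = deriv lobeAngle lobeZero := by
    rw [(hasDerivAt_lobeAngle _).deriv, (hasDerivAt_lobeAngle _).deriv, Real.cos_neg, Real.sin_neg,
      neg_sq]
  have hl : (0 : ℝ) < l := by exact_mod_cast j.pos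
  have hprod : 0 < l * Real.sin lobeZero * deriv bump (Real.cos lobeZero) *
      deriv lobeAngle lobeZero := by positivity
  refine det2_deriv_polarCurve_pos differentiable_curveRadius differentiable_curveAngle
    (curveRadius_pos j.pos _) (curveRadius_pos j.pos _) (polarCurve_lobePoint_neg_lobeZero j) ?_
  rw [deriv_curveRadius_lobePoint j hneg, deriv_curveRadius_lobePoint j abs_lobeZero_lt.le,
    deriv_curveAngle_lobePoint j hneg, deriv_curveAngle_lobePoint j abs_lobeZero_lt.le, heven,
    Real.sin_neg, Real.cos_neg]
  linarith

lemma eq_of_curveAngle_lobePoint_eq {i j : Fin l} {u v : ℝ} (hu : |u| < Real.pi / 2)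
    (hv : |v| < Real.pi / 2) {n : ℤ}
    (h : curveAngle k l (lobePoint l i u) =
      curveAngle k l (lobePoint l j v) + n * (2 * Real.pi)) :
    i = j ∧ lobeAngle u = lobeAngle v := by
  have hl : (l : ℝ) ≠ 0 := by exact_mod_cast i.pos.ne'
  have hdiff : lobeAngle u - lobeAngle v = (j - i + n * l : ℤ) * (2 * Real.pi) := by
    rw [curveAngle_lobePoint i hu.le, curveAngle_lobePoint j hv.le] at h
    field_simp at h
    push_cast
    linarith
  have hindex : (j - i + n * l : ℤ) = 0 := by
    refine int_eq_zero_of_abs_mul_lt (a := 2 * Real.pi) ?_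
    rw [← hdiff]
    linarith [abs_sub (lobeAngle u) (lobeAngle v), abs_lobeAngle_lt_pi hu, abs_lobeAngle_lt_pi hv]
  have hn : n = 0 := by
    refine int_eq_zero_of_abs_mul_lt (a := l) ?_
    have habs : |n * (l : ℤ)| < l :=
      abs_lt.mpr ⟨by linarith [i.isLt, j.isLt], by linarith [i.isLt, j.isLt]⟩
    exact_mod_cast habs
  rw [hindex, Int.cast_zero, zero_mul, sub_eq_zero] at hdiff
  rw [hn] at hindex
  exact ⟨Fin.ext (by omega), hdiff⟩

lemma exists_lobePoint_of_polarCurve_eq (hl : 0 < l) {x y : ℝ} (hx : 0 ≤ x) (hxy : x < y)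
    (hy : y < 2 * Real.pi) (hlobe : 2 < curveRadius l x)
    (h : polarCurve (curveRadius l) (curveAngle k l) x =
      polarCurve (curveRadius l) (curveAngle k l) y) :
    ∃ j, lobePoint l j (-lobeZero) = x ∧ lobePoint l j lobeZero = y := by
  obtain ⟨hr, n, hφ⟩ := (polarCurve_eq_iff (curveRadius_pos hl x) (curveRadius_pos hl y)).mp h
  obtain ⟨i, u, hu, rfl⟩ := exists_lobePoint_eq ⟨hx, hxy.trans hy⟩
    ((two_lt_curveRadius_iff hl).mp hlobe)
  obtain ⟨j, v, hv, rfl⟩ := exists_lobePoint_eq ⟨hx.trans hxy.le, hy⟩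
    ((two_lt_curveRadius_iff hl).mp (hr ▸ hlobe))
  obtain ⟨rfl, hangle⟩ := eq_of_curveAngle_lobePoint_eq hu hv hφ
  rw [(lobePoint_strictMono i).lt_iff_lt] at hxy
  rw [curveRadius_lobePoint i hu.le, curveRadius_lobePoint i hv.le, add_right_inj] at hr
  have hcos : Real.cos |u| = Real.cos |v| := by
    rw [Real.cos_abs, Real.cos_abs]
    exact eq_of_bump_eq (Real.cos_pos_of_mem_Ioo (abs_lt.mp hu)) hr
  have habs : |u| = |v| := Real.injOn_cos ⟨abs_nonneg u, by linarith [Real.pi_pos]⟩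
    ⟨abs_nonneg v, by linarith [Real.pi_pos]⟩ hcos
  obtain rfl : u = -v := (abs_eq_abs.mp habs).resolve_left hxy.ne
  rw [lobeAngle_neg, neg_eq_self] at hangle
  obtain rfl : v = lobeZero := eq_lobeZero ⟨neg_lt_self_iff.mp hxy, (abs_lt.mp hv).2⟩ hangle
  exact ⟨i, rfl, rfl⟩

end lobePoint

section spiralPoint

variable {k l : ℕ}

lemma curveAngle_of_mem_Icc (hl : 0 < l) {x : ℝ}
    (hx : x ∈ Icc (spiralHalfWidth l) (2 * Real.pi - spiralHalfWidth l))
    (hcos : 0 ≤ Real.cos (l * x)) : curveAngle k l x = x + Real.pi * k := by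
  rw [curveAngle, lobeBump_eq_zero hcos, spiralTurn_eq_half hl hx]
  ring

lemma curveAngle_zero : curveAngle k l 0 = 0 := by
  simp [curveAngle, spiralTurn]

lemma curveAngle_spiralHalfWidth (hl : 0 < l) :
    curveAngle k l (spiralHalfWidth l) = spiralHalfWidth l + Real.pi * k := by
  refine curveAngle_of_mem_Icc hl ⟨le_rfl, ?_⟩ ?_
  · linarith [spiralHalfWidth_le hl, Real.pi_pos]
  · rw [mul_spiralHalfWidth hl, Real.cos_pi_div_two]

lemma strictMonoOn_curveAngle (hl : 0 < l) :
    StrictMonoOn (curveAngle k l) (Icc 0 (spiralHalfWidth l)) := by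
  refine strictMonoOn_of_deriv_pos (convex_Icc _ _) contDiff_curveAngle.continuous.continuousOn
    fun x hx => ?_
  rw [interior_Icc] at hx
  exact one_pos.trans_le (one_le_deriv_curveAngle hl
    (cos_mul_pos_of_cos_lt_cos hl (cos_lt_cos_of_mem_Ico hl (Ioo_subset_Ico_self hx))).le)

lemma exists_curveAngle_eq (hl : 0 < l) (i : Fin k) :
    ∃ x ∈ Ioo 0 (spiralHalfWidth l), curveAngle k l x = (i + 1) * Real.pi := by
  refine intermediate_value_Ioo (spiralHalfWidth_pos hl).le
    contDiff_curveAngle.continuous.continuousOn ⟨?_, ?_⟩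
  · rw [curveAngle_zero]
    positivity
  · have hi : (i : ℝ) + 1 ≤ k := by exact_mod_cast i.isLt
    rw [curveAngle_spiralHalfWidth hl, mul_comm Real.pi]
    linarith [mul_le_mul_of_nonneg_right hi Real.pi_pos.le, spiralHalfWidth_pos hl]

/-- The parameter of the first passage through the `i`-th crossing of the spiral with its mirror
image. -/
def spiralPoint (hl : 0 < l) (i : Fin k) : ℝ := (exists_curveAngle_eq hl i).choose

lemma spiralPoint_mem (hl : 0 < l) (i : Fin k) :
    spiralPoint hl i ∈ Ioo 0 (spiralHalfWidth l) :=
  (exists_curveAngle_eq hl i).choose_spec.1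

lemma curveAngle_spiralPoint (hl : 0 < l) (i : Fin k) :
    curveAngle k l (spiralPoint hl i) = (i + 1) * Real.pi :=
  (exists_curveAngle_eq hl i).choose_spec.2

lemma spiralPoint_strictMono (hl : 0 < l) : StrictMono (spiralPoint (k := k) hl) :=
  fun i j hij => by
    rw [← (strictMonoOn_curveAngle (k := k) hl).lt_iff_lt
      (Ioo_subset_Icc_self (spiralPoint_mem hl i)) (Ioo_subset_Icc_self (spiralPoint_mem hl j)),
      curveAngle_spiralPoint, curveAngle_spiralPoint]
    gcongr
    exact hij

lemma polarCurve_two_pi_sub_spiralPoint (hl : 0 < l) (i : Fin k) :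
    polarCurve (curveRadius l) (curveAngle k l) (spiralPoint hl i) =
      polarCurve (curveRadius l) (curveAngle k l) (2 * Real.pi - spiralPoint hl i) := by
  refine polarCurve_eq_of_eq (n := i - k) (curveRadius_two_pi_sub _).symm ?_
  rw [curveAngle_two_pi_sub hl, curveAngle_spiralPoint]
  push_cast
  ring

lemma det2_deriv_spiralPoint_pos (hl : 0 < l) (i : Fin k) :
    0 < det2 (deriv (polarCurve (curveRadius l) (curveAngle k l)) (spiralPoint hl i))
      (deriv (polarCurve (curveRadius l) (curveAngle k l))
        (2 * Real.pi - spiralPoint hl i)) := by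
  set x := spiralPoint hl i
  have hx : x ∈ Ioo 0 (spiralHalfWidth l) := spiralPoint_mem hl i
  have hcos := cos_lt_cos_of_mem_Ico hl (Ioo_subset_Ico_self hx)
  have hcos_mul := (cos_mul_pos_of_cos_lt_cos hl hcos).le
  have hangle : 0 < deriv (curveAngle k l) x :=
    one_pos.trans_le (one_le_deriv_curveAngle hl hcos_mul)
  have hradius : 0 < deriv (curveRadius l) x := by
    rw [deriv_curveRadius_of_cos_mul_nonneg hcos_mul]
    exact mul_pos (Real.sin_pos_of_pos_of_lt_pi hx.1
      (by linarith [hx.2, spiralHalfWidth_le hl, Real.pi_pos])) (deriv_bump_pos (sub_pos.mpr hcos))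
  have hradius_reflect : deriv (curveRadius l) (2 * Real.pi - x) = -deriv (curveRadius l) x := by
    rw [← neg_eq_iff_eq_neg, ← deriv_comp_const_sub, funext curveRadius_two_pi_sub]
  have hangle_reflect : deriv (curveAngle k l) (2 * Real.pi - x) = deriv (curveAngle k l) x := by
    rw [← neg_inj, ← deriv_comp_const_sub, funext (curveAngle_two_pi_sub hl), deriv_const_sub]
  refine det2_deriv_polarCurve_pos differentiable_curveRadius differentiable_curveAngle
    (curveRadius_pos hl _) (curveRadius_pos hl _) (polarCurve_two_pi_sub_spiralPoint hl i) ?_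
  rw [hradius_reflect, hangle_reflect]
  linarith [mul_pos hradius hangle]

lemma eq_two_pi_sub_of_cos_eq_cos {x y : ℝ} (hx : 0 ≤ x) (hxy : x < y) (hy : y < 2 * Real.pi)
    (h : Real.cos x = Real.cos y) : y = 2 * Real.pi - x := by
  obtain ⟨n, hn | hn⟩ := Real.cos_eq_cos_iff.mp h
  · have hzero : n = 0 := by
      refine int_eq_zero_of_abs_mul_lt (a := 2 * Real.pi) (abs_lt.mpr ?_)
      constructor <;> linarith
    rw [hzero, Int.cast_zero] at hn
    linarith
  · have hone : n - 1 = 0 := by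
      refine int_eq_zero_of_abs_mul_lt (a := 2 * Real.pi) (abs_lt.mpr ?_)
      push_cast
      constructor <;> linarith
    rw [sub_eq_zero.mp hone, Int.cast_one] at hn
    linarith

lemma exists_spiralPoint_of_curveAngle_eq (hl : 0 < l) {x : ℝ}
    (hx : x ∈ Ioo 0 (spiralHalfWidth l)) {m : ℤ} (h : curveAngle k l x = m * Real.pi) :
    ∃ i : Fin k, spiralPoint hl i = x := by
  have hmem := Ioo_subset_Icc_self hx
  have hh := (spiralHalfWidth_pos hl).le
  have hpos := strictMonoOn_curveAngle (k := k) hl (left_mem_Icc.mpr hh) hmem hx.1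
  have hlt := strictMonoOn_curveAngle (k := k) hl hmem (right_mem_Icc.mpr hh) hx.2
  rw [curveAngle_zero, h] at hpos
  rw [curveAngle_spiralHalfWidth hl, h] at hlt
  have hm_pos : 0 < m := by exact_mod_cast pos_of_mul_pos_left hpos Real.pi_pos.le
  have hm_lt : m < k + 1 := by
    have hmul : (m : ℝ) * Real.pi < (k + 1) * Real.pi := by
      linarith [spiralHalfWidth_le hl, Real.pi_pos]
    exact_mod_cast lt_of_mul_lt_mul_right hmul Real.pi_pos.le
  obtain ⟨i, rfl⟩ : ∃ i : Fin k, m = i + 1 :=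
    ⟨⟨(m - 1).toNat, by omega⟩, by rw [Fin.val_mk]; omega⟩
  refine ⟨i, (strictMonoOn_curveAngle (k := k) hl).injOn
    (Ioo_subset_Icc_self (spiralPoint_mem hl i)) hmem ?_⟩
  rw [h, curveAngle_spiralPoint]
  push_cast
  rfl

lemma exists_spiralPoint_of_polarCurve_eq (hl : 0 < l) {x y : ℝ} (hx : 0 ≤ x) (hxy : x < y)
    (hy : y < 2 * Real.pi) (hspiral : curveRadius l x < 2)
    (h : polarCurve (curveRadius l) (curveAngle k l) x =
      polarCurve (curveRadius l) (curveAngle k l) y) :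
    ∃ i : Fin k, spiralPoint hl i = x ∧ 2 * Real.pi - spiralPoint hl i = y := by
  obtain ⟨hr, n, hφ⟩ := (polarCurve_eq_iff (curveRadius_pos hl x) (curveRadius_pos hl y)).mp h
  have hcosx := (curveRadius_lt_two_iff hl).mp hspiral
  have hcosy := (curveRadius_lt_two_iff hl).mp (hr ▸ hspiral)
  have hbump : spiralBump l x = spiralBump l y := by
    rw [curveRadius, curveRadius, lobeBump_eq_zero (cos_mul_pos_of_cos_lt_cos hl hcosx).le,
      lobeBump_eq_zero (cos_mul_pos_of_cos_lt_cos hl hcosy).le] at hr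
    linarith
  have hcos : Real.cos x = Real.cos y := sub_left_inj.mp (eq_of_bump_eq (sub_pos.mpr hcosx) hbump)
  obtain rfl := eq_two_pi_sub_of_cos_eq_cos hx hxy hy hcos
  have hlt : x < spiralHalfWidth l := by
    by_contra! hle
    exact hcosx.not_ge (cos_le_cos_of_mem_Icc hl
      ⟨hle, by linarith [spiralHalfWidth_le hl, Real.pi_pos]⟩)
  obtain ⟨i, hi⟩ := exists_spiralPoint_of_curveAngle_eq (k := k) (m := k + 1 + n) hl
    ⟨by linarith, hlt⟩ (by
      rw [curveAngle_two_pi_sub hl] at hφ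
      push_cast at hφ ⊢
      linarith)
  exact ⟨i, hi, by rw [hi]⟩

lemma curveRadius_ne_two_of_polarCurve_eq (hl : 0 < l) {x y : ℝ} (hx : 0 ≤ x) (hxy : x < y)
    (hy : y < 2 * Real.pi)
    (h : polarCurve (curveRadius l) (curveAngle k l) x =
      polarCurve (curveRadius l) (curveAngle k l) y) : curveRadius l x ≠ 2 := fun hx2 => by
  obtain ⟨hr, n, hφ⟩ := (polarCurve_eq_iff (curveRadius_pos hl x) (curveRadius_pos hl y)).mp h
  have hangle : ∀ {z}, z ∈ Ico 0 (2 * Real.pi) → curveRadius l z = 2 →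
      curveAngle k l z = z + Real.pi * k := fun hz hz2 => by
    refine curveAngle_of_mem_Icc hl (mem_Icc_of_cos_le_cos hl hz ?_) ?_
    · exact not_lt.mp ((curveRadius_lt_two_iff hl).not.mp hz2.not_lt)
    · exact not_lt.mp ((two_lt_curveRadius_iff hl).not.mp hz2.not_gt)
  rw [hangle ⟨hx, hxy.trans hy⟩ hx2, hangle ⟨hx.trans hxy.le, hy⟩ (hr ▸ hx2)] at hφ
  have hzero : n = 0 := by
    refine int_eq_zero_of_abs_mul_lt (a := 2 * Real.pi) (abs_lt.mpr ?_)
    constructor <;> linarith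
  rw [hzero, Int.cast_zero] at hφ
  linarith

end spiralPoint

section crossings

variable {k l : ℕ}

lemma polarCurve_curve_eq_iff (hl : 0 < l) {x y : ℝ} (hx : 0 ≤ x) (hxy : x < y)
    (hy : y < 2 * Real.pi) :
    polarCurve (curveRadius l) (curveAngle k l) x =
        polarCurve (curveRadius l) (curveAngle k l) y ↔
      (∃ i : Fin k, spiralPoint hl i = x ∧ 2 * Real.pi - spiralPoint hl i = y) ∨
        ∃ j, lobePoint l j (-lobeZero) = x ∧ lobePoint l j lobeZero = y := by
  constructor
  · intro h
    rcases (curveRadius_ne_two_of_polarCurve_eq hl hx hxy hy h).lt_or_gt with hspiral | hlobe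
    · exact .inl (exists_spiralPoint_of_polarCurve_eq hl hx hxy hy hspiral h)
    · exact .inr (exists_lobePoint_of_polarCurve_eq hl hx hxy hy hlobe h)
  · rintro (⟨i, rfl, rfl⟩ | ⟨j, rfl, rfl⟩)
    · exact polarCurve_two_pi_sub_spiralPoint hl i
    · exact polarCurve_lobePoint_neg_lobeZero j

lemma lobePoint_lobeZero_lt {i j : Fin l} (hij : i < j) :
    lobePoint l i lobeZero < lobePoint l j (-lobeZero) := by
  have hl : (0 : ℝ) < l := by exact_mod_cast i.pos
  have hij' : (i : ℝ) + 1 ≤ j := by exact_mod_cast hij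
  refine div_lt_div_of_pos_right ?_ hl
  linarith [mul_le_mul_of_nonneg_right hij' Real.pi_pos.le, lobeZero_mem.2, Real.pi_pos]

lemma isNestedIntervals_spiralPoint_lobePoint (hl : 0 < l) :
    PlanarCurve.IsNestedIntervals (fun i : Fin k => spiralPoint hl i)
      (fun i => 2 * Real.pi - spiralPoint hl i) (fun j => lobePoint l j (-lobeZero))
      (fun j => lobePoint l j lobeZero) where
  strictMono_outer_left := spiralPoint_strictMono hl
  strictAnti_outer_right _ _ hij := sub_lt_sub_left (spiralPoint_strictMono hl hij) _
  outer_left_lt_outer_right i j := by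
    linarith [(spiralPoint_mem hl i).2, (spiralPoint_mem hl j).2, spiralHalfWidth_le hl,
      Real.pi_pos]
  outer_left_lt_inner_left i j := (spiralPoint_mem hl i).2.trans_le
    (lobePoint_mem_Icc j ((abs_neg lobeZero).trans_le abs_lobeZero_lt.le)).1
  inner_right_lt_outer_right j i := (lobePoint_mem_Icc j abs_lobeZero_lt.le).2.trans_lt
    (sub_lt_sub_left (spiralPoint_mem hl i).2 _)
  inner_left_lt_inner_right j := lobePoint_strictMono j (neg_lt_self lobeZero_mem.1)
  inner_right_lt_inner_left := lobePoint_lobeZero_lt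

lemma isPositiveCrossingEnumeration_spiralLobeCurve (hl : 0 < l) :
    PlanarCurve.IsPositiveCrossingEnumeration (spiralLobeCurve k l hl)
      (Sum.elim (fun i : Fin k => spiralPoint hl i / (2 * Real.pi))
        (fun j => lobePoint l j (-lobeZero) / (2 * Real.pi)))
      (Sum.elim (fun i : Fin k => (2 * Real.pi - spiralPoint hl i) / (2 * Real.pi))
        (fun j => lobePoint l j lobeZero / (2 * Real.pi))) := by
  have hnested := (isNestedIntervals_spiralPoint_lobePoint (k := k) hl).div_const Real.two_pi_pos
  have hwidth := spiralHalfWidth_pos hl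
  refine ⟨hnested.injective_elim, ?_, hnested.elim_lt_elim, ?_, hnested.elim_ne_elim, ?_, ?_⟩
  · rintro (i | j)
    · exact div_pos (spiralPoint_mem hl i).1 Real.two_pi_pos
    · exact div_pos (hwidth.trans_le (lobePoint_mem_Icc j
        ((abs_neg lobeZero).trans_le abs_lobeZero_lt.le)).1) Real.two_pi_pos
  · rintro (i | j) <;> refine (div_lt_one Real.two_pi_pos).mpr ?_
    · linarith [(spiralPoint_mem hl i).1]
    · linarith [(lobePoint_mem_Icc j abs_lobeZero_lt.le).2]
  · intro s t hs hst ht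
    have hπ := Real.two_pi_pos
    simp only [Sum.exists, Sum.elim_inl, Sum.elim_inr, div_eq_iff hπ.ne', mul_comm _ (2 * Real.pi)]
    exact polarCurve_curve_eq_iff hl (by positivity) (by gcongr) (mul_lt_of_lt_one_right hπ ht)
  · intro i
    rw [deriv_spiralLobeCurve, deriv_spiralLobeCurve, det2_smul_smul]
    refine mul_pos (by positivity) ?_
    rcases i with i | j <;>
      simp only [Sum.elim_inl, Sum.elim_inr, mul_div_cancel₀ _ Real.two_pi_pos.ne']
    · exact det2_deriv_spiralPoint_pos hl i
    · exact det2_deriv_lobePoint_pos j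

end crossings

theorem statement15_general (ω n : ℤ) (hωn : |ω| ≤ n) (hpar : Odd (n + ω))
    (k l : ℤ) (hk : k = (n + ω - 1) / 2) (hl : l = (n - ω + 1) / 2) :
    ∃ c : PlanarCurve, c.Stable ∧ (c.crossings : ℤ) = n ∧ c.HasWhitney ω ∧
      PlanarCurve.fX c =
        (∑ i ∈ Finset.range k.toNat,
          FreeAbelianGroup.of ((l + i : ℤ), ((i : ℤ) + 1 - k))) +
        l • FreeAbelianGroup.of ((0 : ℤ), l - 1 - k) := by
  rw [abs_le] at hωn
  obtain ⟨m, hm⟩ := hpar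
  lift k to ℕ using by omega
  lift l to ℕ using by omega
  have hlpos : 0 < l := by omega
  have henum := isPositiveCrossingEnumeration_spiralLobeCurve (k := k) hlpos
  have hnested := (isNestedIntervals_spiralPoint_lobePoint (k := k) hlpos).div_const
    Real.two_pi_pos
  refine ⟨spiralLobeCurve k l hlpos, henum.stable, ?_, ?_, hnested.fX_eq henum⟩
  · rw [henum.crossings_eq, Nat.card_sum, Nat.card_fin, Nat.card_fin]
    omega
  · obtain rfl : ω = k + 1 - l := by omega
    exact hasWhitney_spiralLobeCurve hlpos

/-- For integers `n ≥ ω ≥ 0` of opposite parity, with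
`k = (n + ω - 1)/2` and `l = (n - ω + 1)/2`, the curve `c_{ω,n}` (with `k` crossings
along its middle horizontal line and `l` empty outward 1-gons along its outer circle) is
a stable planar curve with exactly `n` crossings and Whitney winding number `ω`, and
`f^X(c_{ω,n}) = Σ_{i=1}^{k} X_{l+i-1, i-k} + l·X_{0, l-1-k}`. -/
theorem statement15 (ω n : ℤ) (h0 : 0 ≤ ω) (hn : ω ≤ n) (hpar : Odd (n + ω))
    (k l : ℤ) (hk : k = (n + ω - 1) / 2) (hl : l = (n - ω + 1) / 2) :
    ∃ c : PlanarCurve, c.Stable ∧ (c.crossings : ℤ) = n ∧ c.HasWhitney ω ∧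
      PlanarCurve.fX c =
        (∑ i ∈ Finset.range k.toNat,
          FreeAbelianGroup.of ((l + i : ℤ), ((i : ℤ) + 1 - k))) +
        l • FreeAbelianGroup.of ((0 : ℤ), l - 1 - k) :=
  statement15_general ω n ((abs_of_nonneg h0).trans_le hn) hpar k l hk hl

end CurvePaper
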